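/- Let n ≥ 4 and let L be one of the Cartan type Lie superalgebras W(n), S(n), or (for n even) S̃(n) over ℂ. Then every super-biderivation of L is an inner super-biderivation; that is, for every homogeneous super-biderivation f of L there exists λ ∈ ℂ such that f(x,y) = λ[x,y] for all x, y ∈ L (equivalently BDer(L) = IBDer(L)). -/

import Mathlib

open scoped BigOperators

noncomputable section

namespace CartanSuper

/-- Coordinates of the exterior algebra `Λ(n)` with respect to the monomial basis
`{x_S : S ⊆ {1,…,n}}`. -/
abbrev Lambda (n : ℕ) := Finset (Fin n) → ℂ

/-- Endomorphism algebra of `Λ(n)`. -/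
abbrev E (n : ℕ) := Module.End ℂ (Lambda n)

variable (n : ℕ)

/-- `(−1)^k`. -/
def msign (k : ℕ) : ℂ := (-1 : ℂ) ^ k

/-- The basis monomial `x_S = x_{i₁}⋯x_{i_k}` (indices in increasing order). -/
def mono (S : Finset (Fin n)) : Lambda n := fun T => if T = S then 1 else 0

/-- Number of inversions between `S` and `T`. -/
def inversions (S T : Finset (Fin n)) : ℕ := ((S ×ˢ T).filter fun p => p.2 < p.1).card

/-- The multiplication of `Λ(n)` in coordinates:
`x_S · x_T = (−1)^{inversions} x_{S ∪ T}` for disjoint `S, T` and `0` otherwise. -/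
def lmulFun (f g : Lambda n) : Lambda n :=
  fun U => ∑ S ∈ U.powerset, msign (inversions n S (U \ S)) * f S * g (U \ S)

/-- Left multiplication by an element of `Λ(n)`, as a linear map `Λ(n) →ₗ End Λ(n)`. -/
def mulOp : Lambda n →ₗ[ℂ] E n where
  toFun f :=
    { toFun := lmulFun n f
      map_add' := by
        intro g h; funext U
        simp [lmulFun, mul_add, Finset.sum_add_distrib]
      map_smul' := by
        intro c g; funext U
        simp only [lmulFun, Pi.smul_apply, smul_eq_mul, RingHom.id_apply, Finset.mul_sum]
        exact Finset.sum_congr rfl (by intros; ring) }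
  map_add' := by
    intro f g; apply LinearMap.ext; intro h; funext U
    show lmulFun n (f + g) h U = lmulFun n f h U + lmulFun n g h U
    simp only [lmulFun]
    rw [← Finset.sum_add_distrib]
    exact Finset.sum_congr rfl (by intros; simp [Pi.add_apply]; ring)
  map_smul' := by
    intro c f; apply LinearMap.ext; intro h; funext U
    show lmulFun n (c • f) h U = (c • lmulFun n f h) U
    simp only [lmulFun, Pi.smul_apply, smul_eq_mul, Finset.mul_sum]
    exact Finset.sum_congr rfl (by intros; ring)

/-- The superderivation `∂_i` of `Λ(n)`, in coordinates. -/
def pd (i : Fin n) : E n where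
  toFun f := fun S =>
    if i ∈ S then 0 else msign (S.filter (· < i)).card * f (insert i S)
  map_add' := by
    intro f g; funext S; by_cases h : i ∈ S <;> simp [h, mul_add]
  map_smul' := by
    intro c f; funext S; by_cases h : i ∈ S <;> simp [h] <;> ring

/-- The parity operator `σ` of `Λ(n)`: `σ(x_S) = (−1)^{|S|} x_S`. -/
def par : E n where
  toFun f := fun S => msign S.card * f S
  map_add' := by intro f g; funext S; simp [mul_add]
  map_smul' := by intro c f; funext S; simp; ring

/-- The super-commutator `[D,F] = D∘F − (−1)^{|D||F|} F∘D`, extended bilinearly to all of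
`End Λ(n)` using the parity operator `σ`
(for homogeneous `D`, `σ∘D∘σ = (−1)^{|D|} D`). -/
def sbFun (D F : E n) : E n :=
  D * F - (2:ℂ)⁻¹ • ((F + par n * F * par n) * D + (F - par n * F * par n) * (par n * D * par n))

/-- The super-commutator as a bilinear map. -/
def sbL : E n →ₗ[ℂ] E n →ₗ[ℂ] E n :=
  LinearMap.mk₂ ℂ (sbFun n)
    (fun D D' F => by
      simp only [sbFun, add_mul, sub_mul, mul_add, mul_sub, smul_mul_assoc, mul_smul_comm,
        smul_add, smul_sub]
      module)
    (fun c D F => by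
      simp only [sbFun, add_mul, sub_mul, mul_add, mul_sub, smul_mul_assoc, mul_smul_comm,
        smul_add, smul_sub]
      module)
    (fun D F F' => by
      simp only [sbFun, add_mul, sub_mul, mul_add, mul_sub, smul_mul_assoc, mul_smul_comm,
        smul_add, smul_sub]
      module)
    (fun c D F => by
      simp only [sbFun, add_mul, sub_mul, mul_add, mul_sub, smul_mul_assoc, mul_smul_comm,
        smul_add, smul_sub]
      module)

/-- Shorthand for the super-commutator. -/
def sb (D F : E n) : E n := sbL n D F

/-- The ℤ₂-homogeneous component of `Λ(n)` of parity `p`. -/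
def lpar (p : ZMod 2) : Submodule ℂ (Lambda n) where
  carrier := {f | ∀ S : Finset (Fin n), (S.card : ZMod 2) ≠ p → f S = 0}
  add_mem' := by intro f g hf hg S hS; simp [Pi.add_apply, hf S hS, hg S hS]
  zero_mem' := by intro S hS; rfl
  smul_mem' := by intro c f hf S hS; simp [Pi.smul_apply, hf S hS]

/-- The ℤ-homogeneous component of `Λ(n)` of degree `m` (zero unless `0 ≤ m ≤ n`). -/
def ldeg (m : ℤ) : Submodule ℂ (Lambda n) where
  carrier := {f | ∀ S : Finset (Fin n), (S.card : ℤ) ≠ m → f S = 0}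
  add_mem' := by intro f g hf hg S hS; simp [Pi.add_apply, hf S hS, hg S hS]
  zero_mem' := by intro S hS; rfl
  smul_mem' := by intro c f hf S hS; simp [Pi.smul_apply, hf S hS]

/-- Endomorphisms of `Λ(n)` that are ℤ₂-homogeneous of parity `p`. -/
def epar (p : ZMod 2) : Submodule ℂ (E n) where
  carrier := {D | ∀ (q : ZMod 2), ∀ f ∈ lpar n q, D f ∈ lpar n (q + p)}
  add_mem' := by
    intro D F hD hF q f hf
    simpa [LinearMap.add_apply] using (lpar n (q + p)).add_mem (hD q f hf) (hF q f hf)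
  zero_mem' := by intro q f hf; simpa using (lpar n (q + p)).zero_mem
  smul_mem' := by
    intro c D hD q f hf
    simpa [LinearMap.smul_apply] using (lpar n (q + p)).smul_mem c (hD q f hf)

/-- Endomorphisms of `Λ(n)` that are ℤ-homogeneous of degree `d`. -/
def edeg (d : ℤ) : Submodule ℂ (E n) where
  carrier := {D | ∀ (m : ℤ), ∀ f ∈ ldeg n m, D f ∈ ldeg n (m + d)}
  add_mem' := by
    intro D F hD hF m f hf
    simpa [LinearMap.add_apply] using (ldeg n (m + d)).add_mem (hD m f hf) (hF m f hf)
  zero_mem' := by intro m f hf; simpa using (ldeg n (m + d)).zero_mem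
  smul_mem' := by
    intro c D hD m f hf
    simpa [LinearMap.smul_apply] using (ldeg n (m + d)).smul_mem c (hD m f hf)

/-- The linear map `(f₁,…,f_n) ↦ ∑ᵢ fᵢ ∂ᵢ`. -/
def Wmap : (Fin n → Lambda n) →ₗ[ℂ] E n where
  toFun F := ∑ i, mulOp n (F i) * pd n i
  map_add' := by
    intro F G
    simp only [Pi.add_apply, map_add, add_mul, Finset.sum_add_distrib]
  map_smul' := by
    intro c F
    simp only [RingHom.id_apply, Pi.smul_apply, map_smul, smul_mul_assoc, Finset.smul_sum]

/-- The divergence `(f₁,…,f_n) ↦ ∑ᵢ ∂ᵢ(fᵢ)`. -/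
def divMap : (Fin n → Lambda n) →ₗ[ℂ] Lambda n where
  toFun F := ∑ i, pd n i (F i)
  map_add' := by
    intro F G
    simp only [Pi.add_apply, map_add, Finset.sum_add_distrib]
  map_smul' := by
    intro c F
    simp only [RingHom.id_apply, Pi.smul_apply, map_smul, Finset.smul_sum]

/-- The Witt type Lie superalgebra `W(n) = {∑ fᵢ∂ᵢ : fᵢ ∈ Λ(n)}`. -/
def Wn : Submodule ℂ (E n) := LinearMap.range (Wmap n)

/-- Divergence-free coefficient tuples. -/
def divFree : Submodule ℂ (Fin n → Lambda n) := LinearMap.ker (divMap n)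

/-- The special type Lie superalgebra `S(n) = {∑ fᵢ∂ᵢ : ∑ ∂ᵢ(fᵢ) = 0}`. -/
def Sn : Submodule ℂ (E n) := (divFree n).map (Wmap n)

/-- The top monomial `ω = x₁x₂⋯x_n`. -/
def omegaTop : Lambda n := mono n Finset.univ

/-- `1 − x₁x₂⋯x_n`. -/
def oneM : Lambda n := mono n ∅ - omegaTop n

/-- Multiplication of every coefficient by `1 − x₁⋯x_n`. -/
def oneMScale : (Fin n → Lambda n) →ₗ[ℂ] (Fin n → Lambda n) :=
  LinearMap.pi fun i => (mulOp n (oneM n)) ∘ₗ LinearMap.proj i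

/-- The Lie superalgebra `S̃(n) = {(1−x₁⋯x_n)∑ fᵢ∂ᵢ : ∑ ∂ᵢ(fᵢ) = 0}` (`n` even). -/
def Stn : Submodule ℂ (E n) := (divFree n).map (Wmap n ∘ₗ oneMScale n)

/-- The conjugate index `i'`. -/
def cidx (i : Fin n) : Fin n :=
  ⟨if i.val < n / 2 then i.val + n / 2 else if i.val < 2 * (n / 2) then i.val - n / 2 else i.val,
   by have := i.isLt; split_ifs <;> omega⟩

/-- The linear map `f ↦ D_H(f) = (−1)^{|f|} ∑ᵢ ∂ᵢ(f)∂_{i'}` (the sign is implemented by the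
parity operator `σ`, so that this is a single linear map agreeing with `D_H` on homogeneous
elements). -/
def DHmap : Lambda n →ₗ[ℂ] E n where
  toFun f := ∑ i, mulOp n (pd n i (par n f)) * pd n (cidx n i)
  map_add' := by
    intro f g
    simp only [map_add, add_mul, Finset.sum_add_distrib]
  map_smul' := by
    intro c f
    simp only [RingHom.id_apply, map_smul, smul_mul_assoc, Finset.smul_sum]

/-- Evaluation of the top coefficient. -/
def evalTop : Lambda n →ₗ[ℂ] ℂ := LinearMap.proj Finset.univ

/-- The Hamiltonian Lie superalgebra `H(n) = {D_H(f) : f ∈ ⊕_{i=0}^{n−1} Λ(n)_i}`. -/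
def Hn : Submodule ℂ (E n) := (LinearMap.ker (evalTop n)).map (DHmap n)

/-- `H̃(n) = {D_H(f) : f ∈ Λ(n)}`. -/
def HtN : Submodule ℂ (E n) := LinearMap.range (DHmap n)

/-- The degree derivation `𝒞 = ∑ᵢ xᵢ∂ᵢ`. -/
def CC : E n := ∑ i, mulOp n (mono n {i}) * pd n i

/-- The span of the diagonal elements `xᵢ∂ᵢ`. -/
def diagSpan : Submodule ℂ (E n) :=
  Submodule.span ℂ (Set.range fun i : Fin n => mulOp n (mono n {i}) * pd n i)

/-- The four families of Cartan type Lie superalgebras. -/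
inductive CT | W | S | St | H
deriving DecidableEq

/-- Validity of the parameter `n` for each family. -/
def CT.valid : CT → ℕ → Prop
  | .W, n => 4 ≤ n
  | .S, n => 4 ≤ n
  | .St, n => 4 ≤ n ∧ Even n
  | .H, n => 4 < n

/-- The Cartan type Lie superalgebra `L` itself. -/
def CT.algebra : CT → (n : ℕ) → Submodule ℂ (E n)
  | .W, n => Wn n
  | .S, n => Sn n
  | .St, n => Stn n
  | .H, n => Hn n

/-- The extended algebra `L'`: `L' = L` for `W(n)` and `S̃(n)`, `L' = S(n) ⊕ ℂ𝒞` for `S(n)`,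
and `L' = H̃(n) ⊕ ℂ𝒞` for `H(n)`. -/
def CT.prime : CT → (n : ℕ) → Submodule ℂ (E n)
  | .W, n => Wn n
  | .S, n => Sn n ⊔ Submodule.span ℂ {CC n}
  | .St, n => Stn n
  | .H, n => HtN n ⊔ Submodule.span ℂ {CC n}

/-- The top degree `ξ_L` of the ℤ-grading. -/
def CT.xi : CT → (n : ℕ) → ℤ
  | .W, n => (n : ℤ) - 1
  | .S, n => (n : ℤ) - 2
  | .St, n => (n : ℤ) - 2
  | .H, n => (n : ℤ) - 3

/-- The ℤ-grading component `L_j = L ∩ W(n)_j`; for `S̃(n)` the component of degree `−1`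
is `span{(1−x₁⋯x_n)∂ᵢ}` instead. -/
def CT.grade (t : CT) (n : ℕ) (j : ℤ) : Submodule ℂ (E n) :=
  match t with
  | .St =>
      if j = -1 then
        Submodule.span ℂ (Set.range fun i : Fin n => mulOp n (oneM n) * pd n i)
      else Stn n ⊓ edeg n j
  | t => t.algebra n ⊓ edeg n j

/-- The ℤ-grading component `L'_j` of the extended algebra `L'`. -/
def CT.grade' (t : CT) (n : ℕ) (j : ℤ) : Submodule ℂ (E n) :=
  match t with
  | .St => CT.grade .St n j
  | t => t.prime n ⊓ edeg n j

/-- The standard Cartan subalgebra `H_L` of `L`: the part of the diagonal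
`span{xᵢ∂ᵢ}` lying in `L`. -/
def CT.cartan (t : CT) (n : ℕ) : Submodule ℂ (E n) := t.algebra n ⊓ diagSpan n

/-- The weight space of `M ⊆ End Λ(n)` of weight `μ ∈ H_L^*` under the adjoint action
of the standard Cartan subalgebra of `L`. -/
def wtsp (t : CT) (n : ℕ) (M : Submodule ℂ (E n)) (μ : Module.Dual ℂ (t.cartan n)) :
    Submodule ℂ (E n) where
  carrier := {x | x ∈ M ∧ ∀ h : t.cartan n, sbL n h x = μ h • x}
  add_mem' := by
    rintro x y ⟨hx, hx'⟩ ⟨hy, hy'⟩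
    exact ⟨M.add_mem hx hy, fun h => by simp [map_add, hx' h, hy' h, smul_add]⟩
  zero_mem' := ⟨M.zero_mem, fun h => by simp⟩
  smul_mem' := by
    rintro c x ⟨hx, hx'⟩
    exact ⟨M.smul_mem c hx, fun h => by simp [map_smul, hx' h, smul_comm c]⟩

/-- The set of roots of `M` with respect to the standard Cartan subalgebra of `L`:
the nonzero weights with nonzero weight space. -/
def CT.roots (t : CT) (n : ℕ) (M : Submodule ℂ (E n)) : Set (Module.Dual ℂ (t.cartan n)) :=
  {ε | ε ≠ 0 ∧ wtsp t n M ε ≠ ⊥}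

/-- The sign `(−1)^p` for `p ∈ ℤ₂`. -/
def sgn (p : ZMod 2) : ℂ := (-1 : ℂ) ^ p.val

/-- `f` is a super-biderivation of `L` of ℤ₂-degree `pf`:
a bilinear map with `f(L_α, L_β) ⊆ L_{α+β+pf}` satisfying
`f([x,y],z) = (−1)^{|x||f|}[x,f(y,z)] + (−1)^{|y||z|}[f(x,z),y]` and
`f(x,[y,z]) = [f(x,y),z] + (−1)^{(|f|+|x|)|y|}[y,f(x,z)]` for homogeneous `x,y,z ∈ L`.
(The bilinear map is given as a bilinear map on the ambient space `End Λ(n)`;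
only its restriction to `L` is relevant.) -/
structure IsSuperBider (L : Submodule ℂ (E n)) (pf : ZMod 2)
    (f : E n →ₗ[ℂ] E n →ₗ[ℂ] E n) : Prop where
  maps : ∀ (α β : ZMod 2), ∀ x ∈ L ⊓ epar n α, ∀ y ∈ L ⊓ epar n β,
    f x y ∈ L ⊓ epar n (α + β + pf)
  eq1 : ∀ (α β γ : ZMod 2), ∀ x ∈ L ⊓ epar n α, ∀ y ∈ L ⊓ epar n β, ∀ z ∈ L ⊓ epar n γ,
    f (sbL n x y) z = sgn (α * pf) • sbL n x (f y z) + sgn (β * γ) • sbL n (f x z) y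
  eq2 : ∀ (α β γ : ZMod 2), ∀ x ∈ L ⊓ epar n α, ∀ y ∈ L ⊓ epar n β, ∀ z ∈ L ⊓ epar n γ,
    f x (sbL n y z) = sbL n (f x y) z + sgn ((pf + α) * β) • sbL n y (f x z)

/-- `D` is a superderivation of `L` of ℤ₂-degree `p`:
`D(L_α) ⊆ L_{α+p}` and `D([x,y]) = [D(x),y] + (−1)^{|D||x|}[x,D(y)]` for homogeneous
`x, y ∈ L`. (Given as a linear map on the ambient space `End Λ(n)`.) -/
structure IsSuperDer (L : Submodule ℂ (E n)) (p : ZMod 2)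
    (D : E n →ₗ[ℂ] E n) : Prop where
  maps : ∀ (α : ZMod 2), ∀ x ∈ L ⊓ epar n α, D x ∈ L ⊓ epar n (α + p)
  leib : ∀ (α β : ZMod 2), ∀ x ∈ L ⊓ epar n α, ∀ y ∈ L ⊓ epar n β,
    D (sbL n x y) = sbL n (D x) y + sgn (p * α) • sbL n x (D y)

/-- `f ∈ BDer(L)_ε`: the super-biderivation `f` has weight `ε ∈ H_L^*`, i.e.
`f(L_η, L_ζ) ⊆ L_{ε+η+ζ}` for all weights `η, ζ`. -/
def CT.HasWeight (t : CT) (n : ℕ) (f : E n →ₗ[ℂ] E n →ₗ[ℂ] E n)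
    (ε : Module.Dual ℂ (t.cartan n)) : Prop :=
  ∀ (η ζ : Module.Dual ℂ (t.cartan n)),
    ∀ x ∈ wtsp t n (t.algebra n) η, ∀ y ∈ wtsp t n (t.algebra n) ζ,
      f x y ∈ wtsp t n (t.algebra n) (ε + η + ζ)

/-- `f ∈ BDer(L)_i`: the super-biderivation `f` has ℤ-degree `i`, i.e.
`f(L_j, L_k) ⊆ L_{i+j+k}` for all `j, k ∈ ℤ`. -/
def CT.HasDeg (t : CT) (n : ℕ) (f : E n →ₗ[ℂ] E n →ₗ[ℂ] E n) (i : ℤ) : Prop :=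
  ∀ (j k : ℤ), ∀ x ∈ t.grade n j, ∀ y ∈ t.grade n k, f x y ∈ t.grade n (i + j + k)

/-!
All these algebras contain a copy of `sl(n)` consisting of linear vector fields. Let `h`, `h'` be
in its diagonal torus and let `x` have weight `η`. The biderivation identities show that
`η(h) η(h') [f(k, l), x]` is unchanged when `(h, h')` is exchanged with `(k, l)`, so `f(h, h')`
annihilates every bracket of two weight vectors with independent weights. In particular it
centralizes `sl(n)`, which leaves a multiple of the Euler field, and it annihilates a vector field
with nonzero constant term, so `f(h, h') = 0`. Then `f(h, x)` has the weight of `x`. The root spaces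
of `sl(n)` are one-dimensional, which gives a scalar `c` with `f(h, x) = c [h, x]` for a root vector
`x`. The scalar does not change when `x` is replaced by a bracket of `x` with a weight vector of
independent weight, so it is the same on all of the algebra. Finally `f(y, ·) - c [y, ·]` is a
superderivation that vanishes on brackets of weight vectors with independent weights, and these
generate the algebra.
-/

section

variable {n}

/-! ### Multiplication operators and derivations of `Λ(n)` -/

-- Without this shortcut, rewriting with `neg_mul` or `mul_neg` fails to unify in `E n`.
instance : HasDistribNeg (E n) := NonUnitalNonAssocRing.toHasDistribNeg

/-- Left multiplication by the generator `x_i`. -/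
abbrev mulX (i : Fin n) : E n := mulOp n (mono n {i})

/-- The vector field `g ∂_k`, as a linear function of its coefficient `g`. -/
def vecField (k : Fin n) : Lambda n →ₗ[ℂ] E n := LinearMap.mulRight ℂ (pd n k) ∘ₗ mulOp n

/-- The linear vector field `x_i ∂_k`; these fields span a copy of `gl(n)`. -/
abbrev linField (i k : Fin n) : E n := vecField k (mono n {i})

/-- The sign `(-1)^{#{s ∈ S : s < j}}` picked up when `x_j` or `∂_j` moves to its place in `x_S`. -/
def crossSign (j : Fin n) (S : Finset (Fin n)) : ℂ := msign (S.filter (· < j)).card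

lemma msign_add (a b : ℕ) : msign (a + b) = msign a * msign b := pow_add _ _ _

lemma msign_mul_self (a : ℕ) : msign a * msign a = 1 := by
  rw [msign, ← mul_pow, neg_one_mul, neg_neg, one_pow]

lemma crossSign_mul_self (j : Fin n) (S : Finset (Fin n)) : crossSign j S * crossSign j S = 1 :=
  msign_mul_self _

lemma crossSign_ne_zero (j : Fin n) (S : Finset (Fin n)) : crossSign j S ≠ 0 :=
  left_ne_zero_of_mul_eq_one (crossSign_mul_self j S)

lemma crossSign_empty (j : Fin n) : crossSign j ∅ = 1 := by simp [crossSign, msign]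

lemma crossSign_insert (i : Fin n) {j : Fin n} {S : Finset (Fin n)} (hj : j ∉ S) :
    crossSign i (insert j S) = (if j < i then -1 else 1) * crossSign i S := by
  unfold crossSign
  rw [Finset.filter_insert]
  split_ifs with h
  · rw [Finset.card_insert_of_notMem (by simp [hj]), add_comm, msign_add]
    simp [msign]
  · rw [one_mul]

lemma crossSign_insert_mul_crossSign_insert {i j : Fin n} (hij : i ≠ j) {S : Finset (Fin n)}
    (hi : i ∉ S) (hj : j ∉ S) :
    crossSign i (insert j S) * crossSign j (insert i S) = -(crossSign i S * crossSign j S) := by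
  rw [crossSign_insert i hj, crossSign_insert j hi]
  rcases lt_or_gt_of_ne hij with h | h <;>
    simp only [h, not_lt.mpr h.le, if_true, if_false] <;> ring

lemma crossSign_insert_mul_crossSign {i j : Fin n} (hij : i ≠ j) {S : Finset (Fin n)} (hi : i ∉ S)
    (hj : j ∉ S) :
    crossSign i (insert j S) * crossSign j S = -(crossSign j (insert i S) * crossSign i S) := by
  rw [crossSign_insert i hj, crossSign_insert j hi]
  rcases lt_or_gt_of_ne hij with h | h <;>
    simp only [h, not_lt.mpr h.le, if_true, if_false] <;> ring

lemma mono_apply (S U : Finset (Fin n)) : mono n S U = if U = S then 1 else 0 := rfl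

lemma mulOp_mono_apply (T : Finset (Fin n)) (g : Lambda n) (U : Finset (Fin n)) :
    mulOp n (mono n T) g U = if T ⊆ U then msign (inversions n T (U \ T)) * g (U \ T) else 0 := by
  change ∑ S ∈ U.powerset, msign (inversions n S (U \ S)) * mono n T S * g (U \ S) = _
  simp [mono_apply]

lemma msign_inversions_singleton (j : Fin n) (S : Finset (Fin n)) :
    msign (inversions n {j} S) = crossSign j S := by
  rw [crossSign, inversions, Finset.singleton_product, Finset.filter_map, Finset.card_map]
  rfl

lemma inversions_union_left {S S' : Finset (Fin n)} (h : Disjoint S S') (T : Finset (Fin n)) :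
    inversions n (S ∪ S') T = inversions n S T + inversions n S' T := by
  unfold inversions
  rw [Finset.union_product, Finset.filter_union, Finset.card_union_of_disjoint]
  exact Finset.disjoint_filter_filter (Finset.disjoint_product.mpr (Or.inl h))

lemma inversions_union_right (S : Finset (Fin n)) {T T' : Finset (Fin n)} (h : Disjoint T T') :
    inversions n S (T ∪ T') = inversions n S T + inversions n S T' := by
  unfold inversions
  rw [Finset.product_union, Finset.filter_union, Finset.card_union_of_disjoint]
  exact Finset.disjoint_filter_filter (Finset.disjoint_product.mpr (Or.inr h))

lemma mulX_apply (j : Fin n) (g : Lambda n) (U : Finset (Fin n)) :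
    mulX j g U = if j ∈ U then crossSign j (U.erase j) * g (U.erase j) else 0 := by
  rw [mulOp_mono_apply, msign_inversions_singleton]
  simp only [Finset.singleton_subset_iff, Finset.sdiff_singleton_eq_erase]

lemma pd_apply (i : Fin n) (f : Lambda n) (S : Finset (Fin n)) :
    pd n i f S = if i ∈ S then 0 else crossSign i S * f (insert i S) := rfl

lemma par_apply (f : Lambda n) (S : Finset (Fin n)) : par n f S = msign S.card * f S := rfl

lemma mulX_mono_of_notMem {j : Fin n} {S : Finset (Fin n)} (hj : j ∉ S) :
    mulX j (mono n S) = crossSign j S • mono n (insert j S) := by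
  funext U
  rw [mulX_apply, Pi.smul_apply, smul_eq_mul, mono_apply, mono_apply]
  by_cases hU : U = insert j S
  · simp [hU, Finset.erase_insert hj]
  · have : j ∈ U → U.erase j ≠ S := fun h h' => hU (h' ▸ (Finset.insert_erase h).symm)
    by_cases hjU : j ∈ U <;> simp [hU, hjU, this]

lemma mulX_mono_of_mem {j : Fin n} {S : Finset (Fin n)} (hj : j ∈ S) :
    mulX j (mono n S) = 0 := by
  funext U
  have : U.erase j ≠ S := by rintro rfl; exact Finset.notMem_erase j U hj
  simp [mulX_apply, mono_apply, this]

lemma mono_insert {j : Fin n} {S : Finset (Fin n)} (hj : j ∉ S) :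
    mono n (insert j S) = crossSign j S • mulX j (mono n S) := by
  rw [mulX_mono_of_notMem hj, smul_smul, crossSign_mul_self, one_smul]

lemma pd_mono_insert {j : Fin n} {S : Finset (Fin n)} (hj : j ∉ S) :
    pd n j (mono n (insert j S)) = crossSign j S • mono n S := by
  funext U
  rw [pd_apply, Pi.smul_apply, smul_eq_mul, mono_apply, mono_apply]
  by_cases hU : U = S
  · simp [hU, hj]
  · have : j ∉ U → insert j U ≠ insert j S := fun h h' => hU <| by
      rw [← Finset.erase_insert h, h', Finset.erase_insert hj]
    by_cases hjU : j ∈ U <;> simp [hU, hjU, this]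

lemma pd_mono_of_notMem {j : Fin n} {S : Finset (Fin n)} (hj : j ∉ S) : pd n j (mono n S) = 0 := by
  funext U
  have : insert j U ≠ S := by rintro rfl; exact hj (Finset.mem_insert_self j U)
  simp [pd_apply, mono_apply, this]

lemma pd_mono_singleton (i k : Fin n) : pd n i (mono n {k}) = if i = k then mono n ∅ else 0 := by
  split_ifs with h
  · subst h
    rw [← insert_empty_eq, pd_mono_insert (Finset.notMem_empty i), crossSign_empty, one_smul]
  · exact pd_mono_of_notMem (by simpa using h)

lemma sum_smul_mono (g : Lambda n) : ∑ S, g S • mono n S = g := by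
  funext U
  simp only [Finset.sum_apply, Pi.smul_apply, smul_eq_mul, mono_apply, mul_ite, mul_one, mul_zero,
    Finset.sum_ite_eq, Finset.mem_univ, if_true]

lemma map_mem_of_mono {V : Type*} [AddCommMonoid V] [Module ℂ V] (A : Lambda n →ₗ[ℂ] V)
    {P : Submodule ℂ V} {g : Lambda n} (h : ∀ S, g S ≠ 0 → A (mono n S) ∈ P) : A g ∈ P := by
  rw [← sum_smul_mono g, map_sum]
  refine Submodule.sum_mem _ fun S _ => ?_
  rw [map_smul]
  rcases eq_or_ne (g S) 0 with hS | hS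
  · simp [hS]
  · exact Submodule.smul_mem _ _ (h S hS)

lemma linearMap_ext_mono {V : Type*} [AddCommMonoid V] [Module ℂ V] {A B : Lambda n →ₗ[ℂ] V}
    (h : ∀ S, A (mono n S) = B (mono n S)) : A = B :=
  LinearMap.ext fun g => by
    rw [← sum_smul_mono g, map_sum, map_sum]
    exact Finset.sum_congr rfl fun S _ => by rw [map_smul, map_smul, h]

lemma linearMap_ext_generators {V : Type*} [AddCommMonoid V] [Module ℂ V]
    {A B : Lambda n →ₗ[ℂ] V} (h0 : A (mono n ∅) = B (mono n ∅))
    (hX : ∀ j g, A g = B g → A (mulX j g) = B (mulX j g)) : A = B :=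
  linearMap_ext_mono fun S => by
    induction S using Finset.induction_on with
    | empty => exact h0
    | insert j S hj ih => rw [mono_insert hj, map_smul, map_smul, hX j _ ih]

lemma mulOp_mono_empty : mulOp n (mono n ∅) = 1 := by
  ext g U
  simp [mulOp_mono_apply, inversions, msign]

lemma mulOp_apply_mono_empty (g : Lambda n) : mulOp n g (mono n ∅) = g := by
  suffices h : (mulOp n).flip (mono n ∅) = LinearMap.id from LinearMap.congr_fun h g
  refine linearMap_ext_mono fun S => ?_
  funext U
  rw [LinearMap.flip_apply, mulOp_mono_apply, LinearMap.id_apply, mono_apply, mono_apply]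
  by_cases hU : U = S
  · simp [hU, inversions, msign]
  · have : S ⊆ U → U \ S ≠ ∅ := fun h h' =>
      hU (Finset.Subset.antisymm (Finset.sdiff_eq_empty_iff_subset.1 h') h)
    by_cases hS : S ⊆ U <;> simp [hU, hS, this]

lemma mulX_mul_mulOp_mono_of_notMem {j : Fin n} {S : Finset (Fin n)} (hj : j ∉ S) :
    mulX j * mulOp n (mono n S) = crossSign j S • mulOp n (mono n (insert j S)) := by
  refine LinearMap.ext fun g => funext fun U => ?_
  change mulX j (mulOp n (mono n S) g) U = crossSign j S * mulOp n (mono n (insert j S)) g U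
  rw [mulX_apply, mulOp_mono_apply, mulOp_mono_apply]
  by_cases h : insert j S ⊆ U
  · obtain ⟨hjU, hSU⟩ := Finset.insert_subset_iff.1 h
    have hSU' : S ⊆ U.erase j := Finset.subset_erase.2 ⟨hSU, hj⟩
    have hdiff : U.erase j \ S = U \ insert j S := by
      rw [Finset.sdiff_insert, Finset.erase_sdiff_comm]
    have hU : U.erase j = S ∪ (U \ insert j S) := by
      rw [← hdiff, Finset.union_sdiff_of_subset hSU']
    have hS : Disjoint S (U \ insert j S) :=
      Finset.disjoint_sdiff.mono_left (Finset.subset_insert j S)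
    rw [if_pos hjU, if_pos hSU', if_pos h, hdiff, ← msign_inversions_singleton j (U.erase j), hU,
      inversions_union_right _ hS, Finset.insert_eq,
      inversions_union_left (Finset.disjoint_singleton_left.2 hj), msign_add, msign_add,
      ← msign_inversions_singleton]
    ring
  · rw [if_neg h, mul_zero]
    split_ifs with hjU hSU
    · exact absurd (Finset.insert_subset hjU (hSU.trans (Finset.erase_subset j U))) h
    · rw [mul_zero]
    · rfl

lemma mulX_mul_mulOp_mono_of_mem {j : Fin n} {S : Finset (Fin n)} (hj : j ∈ S) :
    mulX j * mulOp n (mono n S) = 0 := by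
  refine LinearMap.ext fun g => funext fun U => ?_
  change mulX j (mulOp n (mono n S) g) U = 0
  have : ¬ S ⊆ U.erase j := fun h => Finset.notMem_erase j U (h hj)
  rw [mulX_apply, mulOp_mono_apply, if_neg this, mul_zero, ite_self]

lemma mulOp_mulX_apply (j : Fin n) (g : Lambda n) : mulOp n (mulX j g) = mulX j * mulOp n g := by
  suffices h : mulOp n ∘ₗ mulX j = LinearMap.mulLeft ℂ (mulX j) ∘ₗ mulOp n from
    LinearMap.congr_fun h g
  refine linearMap_ext_mono fun S => ?_
  change mulOp n (mulX j (mono n S)) = mulX j * mulOp n (mono n S)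
  by_cases hj : j ∈ S
  · rw [mulX_mono_of_mem hj, mulX_mul_mulOp_mono_of_mem hj, map_zero]
  · rw [mulX_mono_of_notMem hj, mulX_mul_mulOp_mono_of_notMem hj, map_smul]

lemma mulX_mul_mulX (i j : Fin n) : mulX i * mulX j = -(mulX j * mulX i) := by
  rcases eq_or_ne i j with rfl | hij
  · have := mulX_mul_mulOp_mono_of_mem (Finset.mem_singleton_self i)
    rw [this, neg_zero]
  · have hi : i ∉ ({j} : Finset (Fin n)) := by simpa using hij
    have hj : j ∉ ({i} : Finset (Fin n)) := by simpa using hij.symm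
    have hsign := crossSign_insert_mul_crossSign hij (Finset.notMem_empty i)
      (Finset.notMem_empty j)
    rw [crossSign_empty, crossSign_empty, mul_one, mul_one, insert_empty_eq, insert_empty_eq]
      at hsign
    rw [mulX_mul_mulOp_mono_of_notMem hi, mulX_mul_mulOp_mono_of_notMem hj, hsign,
      Finset.pair_comm]
    exact neg_smul _ (mulOp n (mono n {j, i}))

lemma pd_mul_pd (i j : Fin n) : pd n i * pd n j = -(pd n j * pd n i) := by
  refine LinearMap.ext fun g => funext fun S => ?_
  change pd n i (pd n j g) S = -pd n j (pd n i g) S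
  simp only [pd_apply, Finset.mem_insert]
  rcases eq_or_ne i j with rfl | hij
  · simp
  by_cases hi : i ∈ S
  · simp [hi]
  by_cases hj : j ∈ S
  · simp [hj]
  have hsign := crossSign_insert_mul_crossSign hij hi hj
  simp only [hi, hj, hij, hij.symm, or_self, if_false, Finset.insert_comm i j]
  linear_combination g (insert j (insert i S)) * hsign

lemma pd_mul_mulX (i j : Fin n) :
    pd n i * mulX j = (if i = j then 1 else 0) - mulX j * pd n i := by
  refine linearMap_ext_mono fun S => ?_
  change pd n i (mulX j (mono n S)) =
    (if i = j then 1 else 0 : E n) (mono n S) - mulX j (pd n i (mono n S))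
  rcases eq_or_ne i j with rfl | hij
  · rw [if_pos rfl, Module.End.one_apply]
    by_cases hi : i ∈ S
    · rw [mulX_mono_of_mem hi, ← Finset.insert_erase hi, pd_mono_insert (Finset.notMem_erase i S),
        map_smul, mulX_mono_of_notMem (Finset.notMem_erase i S), smul_smul, crossSign_mul_self,
        one_smul, map_zero, sub_self]
    · rw [mulX_mono_of_notMem hi, pd_mono_of_notMem hi, map_smul, pd_mono_insert hi, smul_smul,
        crossSign_mul_self, one_smul, map_zero, sub_zero]
  rw [if_neg hij, LinearMap.zero_apply, zero_sub]
  by_cases hi : i ∈ S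
  · obtain ⟨R, hR, rfl⟩ : ∃ R, i ∉ R ∧ S = insert i R :=
      ⟨S.erase i, Finset.notMem_erase i S, (Finset.insert_erase hi).symm⟩
    by_cases hj : j ∈ R
    · rw [mulX_mono_of_mem (Finset.mem_insert_of_mem hj), pd_mono_insert hR, map_smul,
        mulX_mono_of_mem hj, map_zero, smul_zero, neg_zero]
    · have hiR : i ∉ insert j R := by simp [hij, hR]
      have hjR : j ∉ insert i R := by simp [hij.symm, hj]
      rw [mulX_mono_of_notMem hjR, pd_mono_insert hR, map_smul, map_smul, mulX_mono_of_notMem hj,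
        Finset.insert_comm, pd_mono_insert hiR, smul_smul, smul_smul, ← neg_smul,
        ← crossSign_insert_mul_crossSign_insert hij hR hj, mul_comm]
  · rw [pd_mono_of_notMem hi, map_zero, neg_zero]
    by_cases hj : j ∈ S
    · rw [mulX_mono_of_mem hj, map_zero]
    · rw [mulX_mono_of_notMem hj, map_smul, pd_mono_of_notMem (by simp [hij, hi]), smul_zero]

lemma par_apply_mono (S : Finset (Fin n)) : par n (mono n S) = msign S.card • mono n S := by
  funext U
  rw [par_apply, Pi.smul_apply, smul_eq_mul, mono_apply]
  split_ifs with h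
  · rw [h]
  · rw [mul_zero, mul_zero]

lemma par_mulX_apply (j : Fin n) (g : Lambda n) : par n (mulX j g) = -mulX j (par n g) := by
  suffices h : par n * mulX j = -(mulX j * par n) from LinearMap.congr_fun h g
  refine linearMap_ext_mono fun S => ?_
  change par n (mulX j (mono n S)) = -mulX j (par n (mono n S))
  rw [par_apply_mono, map_smul]
  by_cases hj : j ∈ S
  · rw [mulX_mono_of_mem hj, map_zero, smul_zero, neg_zero]
  · rw [mulX_mono_of_notMem hj, map_smul, par_apply_mono, Finset.card_insert_of_notMem hj,
      msign_add, smul_comm, ← neg_smul]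
    simp [msign]

theorem mulX_mul_mulOp_par (i : Fin n) (g : Lambda n) :
    mulX i * mulOp n (par n g) = mulOp n g * mulX i := by
  suffices h : LinearMap.mulLeft ℂ (mulX i) ∘ₗ mulOp n ∘ₗ par n =
      LinearMap.mulRight ℂ (mulX i) ∘ₗ mulOp n from LinearMap.congr_fun h g
  refine linearMap_ext_generators ?_ fun j m ih => ?_
  · change mulX i * mulOp n (par n (mono n ∅)) = mulOp n (mono n ∅) * mulX i
    simp [par_apply_mono, mulOp_mono_empty, msign]
  · change mulX i * mulOp n (par n m) = mulOp n m * mulX i at ih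
    change mulX i * mulOp n (par n (mulX j m)) = mulOp n (mulX j m) * mulX i
    calc mulX i * mulOp n (par n (mulX j m))
        = -(mulX i * mulX j) * mulOp n (par n m) := by
          rw [par_mulX_apply, map_neg, mulOp_mulX_apply]; noncomm_ring
      _ = mulX j * (mulX i * mulOp n (par n m)) := by rw [mulX_mul_mulX]; noncomm_ring
      _ = mulOp n (mulX j m) * mulX i := by rw [ih, mulOp_mulX_apply, mul_assoc]

theorem pd_mul_mulOp (k : Fin n) (g : Lambda n) :
    pd n k * mulOp n g = mulOp n (pd n k g) + mulOp n (par n g) * pd n k := by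
  suffices h : LinearMap.mulLeft ℂ (pd n k) ∘ₗ mulOp n =
      mulOp n ∘ₗ pd n k + LinearMap.mulRight ℂ (pd n k) ∘ₗ mulOp n ∘ₗ par n from
    LinearMap.congr_fun h g
  refine linearMap_ext_generators ?_ fun j m ih => ?_
  · change pd n k * mulOp n (mono n ∅) =
      mulOp n (pd n k (mono n ∅)) + mulOp n (par n (mono n ∅)) * pd n k
    simp [par_apply_mono, mulOp_mono_empty, msign, pd_mono_of_notMem]
  · change pd n k * mulOp n m = mulOp n (pd n k m) + mulOp n (par n m) * pd n k at ih
    change pd n k * mulOp n (mulX j m) =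
      mulOp n (pd n k (mulX j m)) + mulOp n (par n (mulX j m)) * pd n k
    have hpd : pd n k (mulX j m) = (if k = j then 1 else 0 : E n) m - mulX j (pd n k m) :=
      LinearMap.congr_fun (pd_mul_mulX k j) m
    have hδ : mulOp n ((if k = j then 1 else 0 : E n) m) =
        (if k = j then 1 else 0) * mulOp n m := by
      split_ifs <;> simp
    rw [mulOp_mulX_apply, ← mul_assoc, pd_mul_mulX, sub_mul, mul_assoc, ih, hpd, map_sub, hδ,
      mulOp_mulX_apply, par_mulX_apply, map_neg, mulOp_mulX_apply]
    noncomm_ring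

/-! ### Parities and the super Jacobi identity -/

lemma sgn_natCast (k : ℕ) : sgn (k : ZMod 2) = msign k := by
  rw [sgn, msign, ZMod.val_natCast, ← neg_one_pow_eq_pow_mod_two]

lemma sgn_add (p q : ZMod 2) : sgn (p + q) = sgn p * sgn q := by
  rw [sgn, ZMod.val_add, ← neg_one_pow_eq_pow_mod_two, pow_add]; rfl

lemma sgn_mul_self (p : ZMod 2) : sgn p * sgn p = 1 := msign_mul_self _

lemma sgn_zero : sgn 0 = 1 := pow_zero _

lemma sgn_one : sgn 1 = -1 := pow_one _

lemma mono_mem_lpar (S : Finset (Fin n)) : mono n S ∈ lpar n S.card := by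
  intro T hT
  rw [mono_apply, if_neg]
  rintro rfl
  exact hT rfl

lemma par_apply_of_mem_lpar {p : ZMod 2} {g : Lambda n} (hg : g ∈ lpar n p) :
    par n g = sgn p • g := by
  funext S
  rw [par_apply, Pi.smul_apply, smul_eq_mul]
  by_cases h : (S.card : ZMod 2) = p
  · rw [← h, sgn_natCast]
  · rw [hg S h, mul_zero, mul_zero]

lemma mul_mem_epar {p q : ZMod 2} {D F : E n} (hD : D ∈ epar n p) (hF : F ∈ epar n q) :
    D * F ∈ epar n (p + q) := by
  intro r g hg
  rw [add_comm p, ← add_assoc]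
  exact hD _ _ (hF r g hg)

lemma mem_epar_of_mono {p : ZMod 2} {D : E n}
    (h : ∀ S : Finset (Fin n), D (mono n S) ∈ lpar n (S.card + p)) : D ∈ epar n p := by
  intro q g hg
  rw [← sum_smul_mono g, map_sum]
  refine Submodule.sum_mem _ fun S _ => ?_
  rw [map_smul]
  by_cases hS : (S.card : ZMod 2) = q
  · exact Submodule.smul_mem _ _ (hS ▸ h S)
  · rw [hg S hS, zero_smul]
    exact Submodule.zero_mem _

lemma mulX_mem_epar (i : Fin n) : mulX i ∈ epar n 1 := by
  refine mem_epar_of_mono fun S => ?_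
  by_cases hi : i ∈ S
  · rw [mulX_mono_of_mem hi]
    exact Submodule.zero_mem _
  · rw [mulX_mono_of_notMem hi, ← Nat.cast_add_one, ← Finset.card_insert_of_notMem hi]
    exact Submodule.smul_mem _ _ (mono_mem_lpar _)

lemma pd_mem_epar (i : Fin n) : pd n i ∈ epar n 1 := by
  refine mem_epar_of_mono fun S => ?_
  by_cases hi : i ∈ S
  · obtain ⟨R, hR, rfl⟩ : ∃ R, i ∉ R ∧ S = insert i R :=
      ⟨S.erase i, Finset.notMem_erase i S, (Finset.insert_erase hi).symm⟩
    rw [pd_mono_insert hR, Finset.card_insert_of_notMem hR, Nat.cast_add_one, add_assoc,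
      CharTwo.add_self_eq_zero, add_zero]
    exact Submodule.smul_mem _ _ (mono_mem_lpar _)
  · rw [pd_mono_of_notMem hi]
    exact Submodule.zero_mem _

lemma mulOp_mono_mem_epar (S : Finset (Fin n)) : mulOp n (mono n S) ∈ epar n S.card := by
  induction S using Finset.induction_on with
  | empty =>
    rw [mulOp_mono_empty]
    intro q g hg
    simpa using hg
  | insert j S hj ih =>
    rw [mono_insert hj, map_smul, mulOp_mulX_apply, Finset.card_insert_of_notMem hj,
      Nat.cast_add_one, add_comm]
    exact Submodule.smul_mem _ _ (mul_mem_epar (mulX_mem_epar j) ih)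

lemma mulOp_mem_epar {q : ZMod 2} {g : Lambda n} (hg : g ∈ lpar n q) : mulOp n g ∈ epar n q := by
  rw [← sum_smul_mono g, map_sum]
  refine Submodule.sum_mem _ fun S _ => ?_
  rw [map_smul]
  by_cases hS : (S.card : ZMod 2) = q
  · exact Submodule.smul_mem _ _ (hS ▸ mulOp_mono_mem_epar S)
  · rw [hg S hS, zero_smul]
    exact Submodule.zero_mem _

lemma vecField_mem_epar {q : ZMod 2} {g : Lambda n} (hg : g ∈ lpar n q) (k : Fin n) :
    vecField k g ∈ epar n (q + 1) :=
  mul_mem_epar (mulOp_mem_epar hg) (pd_mem_epar k)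

lemma linField_mem_epar (i k : Fin n) : linField i k ∈ epar n 0 := by
  simpa [CharTwo.add_self_eq_zero] using vecField_mem_epar (mono_mem_lpar {i}) k

lemma par_mul_mul_par {p : ZMod 2} {D : E n} (hD : D ∈ epar n p) :
    par n * D * par n = sgn p • D := by
  refine linearMap_ext_mono fun S => ?_
  change par n (D (par n (mono n S))) = sgn p • D (mono n S)
  rw [par_apply_of_mem_lpar (mono_mem_lpar S), map_smul, map_smul,
    par_apply_of_mem_lpar (hD _ _ (mono_mem_lpar S)), smul_smul, sgn_add, ← mul_assoc,
    sgn_mul_self, one_mul]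

lemma eq_zero_of_mem_epar_of_mem_epar {D : E n} {p : ZMod 2} (h : D ∈ epar n p)
    (h' : D ∈ epar n (p + 1)) : D = 0 := by
  have hsgn : sgn p • D = -sgn p • D := by
    rw [← par_mul_mul_par h, par_mul_mul_par h', sgn_add, sgn_one, mul_neg_one]
  have hD : (2 * sgn p) • D = 0 := by
    rw [two_mul, add_smul]
    nth_rewrite 2 [hsgn]
    module
  exact (smul_eq_zero.1 hD).resolve_left
    (mul_ne_zero two_ne_zero (left_ne_zero_of_mul_eq_one (sgn_mul_self p)))

lemma sbL_even_left {D : E n} (hD : D ∈ epar n 0) (F : E n) : sbL n D F = D * F - F * D := by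
  change sbFun n D F = _
  rw [sbFun, par_mul_mul_par hD, sgn_zero, one_smul, ← add_mul, add_add_sub_cancel, ← two_smul ℂ F,
    smul_mul_assoc, inv_smul_smul₀ two_ne_zero]

lemma sbL_even_right {F : E n} (hF : F ∈ epar n 0) (D : E n) : sbL n D F = D * F - F * D := by
  change sbFun n D F = _
  rw [sbFun, par_mul_mul_par hF, sgn_zero, one_smul, sub_self, zero_mul, add_zero, ← two_smul ℂ F,
    smul_mul_assoc, inv_smul_smul₀ two_ne_zero]

lemma sbL_of_mem_epar {p q : ZMod 2} {D F : E n} (hD : D ∈ epar n p) (hF : F ∈ epar n q) :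
    sbL n D F = D * F - sgn (p * q) • (F * D) := by
  change sbFun n D F = _
  rw [sbFun, par_mul_mul_par hD, par_mul_mul_par hF, mul_smul_comm, sub_mul, add_mul,
    smul_mul_assoc]
  have hcases : ∀ r : ZMod 2, r = 0 ∨ r = 1 := by decide
  rcases hcases p with rfl | rfl <;> rcases hcases q with rfl | rfl <;>
    simp only [mul_zero, mul_one, sgn_zero, sgn_one] <;> module

lemma sbL_mem_epar {p q : ZMod 2} {D F : E n} (hD : D ∈ epar n p) (hF : F ∈ epar n q) :
    sbL n D F ∈ epar n (p + q) := by
  rw [sbL_of_mem_epar hD hF]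
  refine Submodule.sub_mem _ (mul_mem_epar hD hF) (Submodule.smul_mem _ _ ?_)
  rw [add_comm]
  exact mul_mem_epar hF hD

lemma sbL_skew {p q : ZMod 2} {x y : E n} (hx : x ∈ epar n p) (hy : y ∈ epar n q) :
    sbL n x y = -sgn (p * q) • sbL n y x := by
  rw [sbL_of_mem_epar hx hy, sbL_of_mem_epar hy hx, mul_comm q p, smul_sub, smul_smul, neg_mul,
    sgn_mul_self]
  module

lemma sbL_skew_of_even_left {x : E n} (hx : x ∈ epar n 0) (y : E n) :
    sbL n y x = -sbL n x y := by
  rw [sbL_even_left hx, sbL_even_right hx, neg_sub]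

theorem sbL_jacobi {p q r : ZMod 2} {x y z : E n} (hx : x ∈ epar n p) (hy : y ∈ epar n q)
    (hz : z ∈ epar n r) :
    sbL n x (sbL n y z) = sbL n (sbL n x y) z + sgn (p * q) • sbL n y (sbL n x z) := by
  rw [sbL_of_mem_epar hx (sbL_mem_epar hy hz), sbL_of_mem_epar (sbL_mem_epar hx hy) hz,
    sbL_of_mem_epar hy (sbL_mem_epar hx hz), sbL_of_mem_epar hx hy, sbL_of_mem_epar hx hz,
    sbL_of_mem_epar hy hz, mul_add, add_mul, mul_add, sgn_add, sgn_add, sgn_add, mul_comm q p]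
  have hpq : sgn (p * q) * sgn (p * q) = 1 := sgn_mul_self _
  generalize sgn (p * q) = a at hpq ⊢
  simp only [mul_sub, sub_mul, mul_smul_comm, smul_mul_assoc, mul_assoc, smul_sub]
  match_scalars
  · ring
  · linear_combination sgn (q * r) * hpq
  · ring
  · ring
  · ring
  · linear_combination -sgn (p * r) * sgn (q * r) * hpq

lemma sbL_jacobi_right {p q r : ZMod 2} {x y z : E n} (hx : x ∈ epar n p) (hy : y ∈ epar n q)
    (hz : z ∈ epar n r) :
    sbL n (sbL n x y) z = sbL n x (sbL n y z) + sgn (q * r) • sbL n (sbL n x z) y := by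
  rw [sbL_jacobi hx hy hz, sbL_skew hy (sbL_mem_epar hx hz), smul_smul, mul_add, sgn_add,
    mul_comm q p, mul_neg, ← mul_assoc, sgn_mul_self, one_mul]
  module

lemma sbL_jacobi_even {q r : ZMod 2} {x y z : E n} (hx : x ∈ epar n 0) (hy : y ∈ epar n q)
    (hz : z ∈ epar n r) :
    sbL n x (sbL n y z) = sbL n (sbL n x y) z + sbL n y (sbL n x z) := by
  rw [sbL_jacobi hx hy hz, zero_mul, sgn_zero, one_smul]

/-! ### Super-biderivations of an algebra with a torus -/

section Torus

variable {ι : Type*}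

/-- A family of commuting even elements of `L`, which stands for a torus of `L`. -/
structure IsTorus (L : Submodule ℂ (E n)) (h : ι → E n) : Prop where
  mem : ∀ i, h i ∈ L ⊓ epar n 0
  comm : ∀ i j, sbL n (h i) (h j) = 0

/-- A weight vector of `L` for the family `h`, homogeneous of parity `p`. Weights are given by
their values `η i` on the `h i`. -/
structure IsWeightVector (L : Submodule ℂ (E n)) (h : ι → E n) (η : ι → ℂ) (p : ZMod 2)
    (x : E n) : Prop where
  mem : x ∈ L ⊓ epar n p
  sbL_eq : ∀ i, sbL n (h i) x = η i • x

/-- Linear independence of two weights, in the form in which it is used: each weight is nonzero at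
some point where the other one vanishes. -/
def IndepWeights (η ζ : ι → ℂ) : Prop :=
  (∃ i, η i ≠ 0 ∧ ζ i = 0) ∧ ∃ j, η j = 0 ∧ ζ j ≠ 0

/-- `z ∈ L` is the bracket of the weight vector `x` with a weight vector of independent weight. -/
def IsIndepBracket (L : Submodule ℂ (E n)) (h : ι → E n) (x z : E n) : Prop :=
  z ∈ L ∧ ∃ η ζ p q y, IsWeightVector L h η p x ∧ IsWeightVector L h ζ q y ∧
    IndepWeights η ζ ∧ sbL n x y = z

/-- On the torus, `f (·, x)` agrees with the inner super-biderivation `c [·, x]`. -/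
def IsScalarOnTorus (f : E n →ₗ[ℂ] E n →ₗ[ℂ] E n) (h : ι → E n) (c : ℂ) (x : E n) : Prop :=
  ∀ i, f (h i) x = c • sbL n (h i) x

/-- Generation of `L` by `G` as a Lie superalgebra. Only brackets known to lie in `L` are taken, so
that the notion does not presuppose that `L` is closed under the bracket. -/
def GeneratedBy (L : Submodule ℂ (E n)) (G : Set (E n)) : Prop :=
  ∀ P : Submodule ℂ (E n), G ⊆ P →
    (∀ p q, ∀ a ∈ L ⊓ epar n p, ∀ b ∈ L ⊓ epar n q, a ∈ P → b ∈ P → sbL n a b ∈ L →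
      sbL n a b ∈ P) → L ≤ P

variable {L : Submodule ℂ (E n)} {h : ι → E n} {η ζ : ι → ℂ} {p q pf : ZMod 2} {x y z : E n}
  {f : E n →ₗ[ℂ] E n →ₗ[ℂ] E n} {c : ℂ}

lemma IndepWeights.symm (hηζ : IndepWeights η ζ) : IndepWeights ζ η := by
  obtain ⟨⟨i, hi, hi'⟩, j, hj, hj'⟩ := hηζ
  exact ⟨⟨j, hj', hj⟩, i, hi', hi⟩

lemma IsTorus.sbL_comm (hT : IsTorus L h) (i k : ι) {u : E n} (hu : u ∈ epar n p) :
    sbL n (h i) (sbL n (h k) u) = sbL n (h k) (sbL n (h i) u) := by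
  rw [sbL_jacobi_even (hT.mem i).2 (hT.mem k).2 hu, hT.comm, map_zero, LinearMap.zero_apply,
    zero_add]

lemma IsTorus.sbL_sbL (hT : IsTorus L h) (i : ι) {u : E n} (hu : u ∈ epar n q)
    (hx : IsWeightVector L h η p x) :
    sbL n (h i) (sbL n u x) = sbL n (sbL n (h i) u) x + η i • sbL n u x := by
  rw [sbL_jacobi_even (hT.mem i).2 hu hx.mem.2, hx.sbL_eq, map_smul]

lemma IsTorus.isWeightVector_sbL (hT : IsTorus L h) (hx : IsWeightVector L h η p x)
    (hy : IsWeightVector L h ζ q y) (hL : sbL n x y ∈ L) :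
    IsWeightVector L h (η + ζ) (p + q) (sbL n x y) where
  mem := ⟨hL, sbL_mem_epar hx.mem.2 hy.mem.2⟩
  sbL_eq i := by
    rw [hT.sbL_sbL i hx.mem.2 hy, hx.sbL_eq, map_smul, LinearMap.smul_apply, ← add_smul,
      Pi.add_apply]

lemma IsSuperBider.apply_torus_left_mem_epar (hf : IsSuperBider n L pf f) (hT : IsTorus L h)
    (i : ι) (hx : x ∈ L ⊓ epar n p) : f (h i) x ∈ epar n (p + pf) :=
  zero_add p ▸ (hf.maps 0 p _ (hT.mem i) x hx).2

lemma IsSuperBider.apply_torus_right_mem_epar (hf : IsSuperBider n L pf f) (hT : IsTorus L h)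
    (i : ι) (hx : x ∈ L ⊓ epar n p) : f x (h i) ∈ epar n (p + pf) :=
  add_zero p ▸ (hf.maps p 0 x hx _ (hT.mem i)).2

lemma IsSuperBider.sbL_apply_left_comm (hf : IsSuperBider n L pf f) (hT : IsTorus L h) (i k : ι)
    (hx : x ∈ L ⊓ epar n p) : sbL n (h i) (f (h k) x) = sbL n (h k) (f (h i) x) := by
  have h1 := hf.eq1 0 0 p _ (hT.mem i) _ (hT.mem k) x hx
  rw [hT.comm, map_zero, LinearMap.zero_apply, zero_mul, zero_mul, sgn_zero, one_smul, one_smul,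
    sbL_skew_of_even_left (hT.mem k).2, ← sub_eq_add_neg] at h1
  exact sub_eq_zero.1 h1.symm

lemma IsSuperBider.sbL_apply_right_comm (hf : IsSuperBider n L pf f) (hT : IsTorus L h) (i k : ι)
    (hx : x ∈ L ⊓ epar n p) : sbL n (h i) (f x (h k)) = sbL n (h k) (f x (h i)) := by
  have h2 := hf.eq2 p 0 0 x hx _ (hT.mem i) _ (hT.mem k)
  rw [hT.comm, map_zero, mul_zero, sgn_zero, one_smul, sbL_skew_of_even_left (hT.mem k).2,
    neg_add_eq_sub] at h2
  exact sub_eq_zero.1 h2.symm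

lemma IsSuperBider.sbL_apply_eq_left (hf : IsSuperBider n L pf f) (hT : IsTorus L h) (i j : ι)
    (hx : IsWeightVector L h η p x) :
    sbL n (f (h i) (h j)) x = η j • f (h i) x - sbL n (h j) (f (h i) x) := by
  have h2 := hf.eq2 0 0 p _ (hT.mem i) _ (hT.mem j) x hx.mem
  rw [hx.sbL_eq, map_smul, mul_zero, sgn_zero, one_smul] at h2
  exact eq_sub_of_add_eq h2.symm

lemma IsSuperBider.sbL_apply_eq_right (hf : IsSuperBider n L pf f) (hT : IsTorus L h) (i j : ι)
    (hx : IsWeightVector L h η p x) :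
    sbL n (f (h i) (h j)) x = η i • f x (h j) - sbL n (h i) (f x (h j)) := by
  have h1 := hf.eq1 0 p 0 _ (hT.mem i) x hx.mem _ (hT.mem j)
  rw [hx.sbL_eq, map_smul, LinearMap.smul_apply, mul_zero, zero_mul, sgn_zero, one_smul,
    one_smul] at h1
  exact eq_sub_of_add_eq' h1.symm

lemma IsSuperBider.smul_sbL_apply_left (hf : IsSuperBider n L pf f) (hT : IsTorus L h) (i j k : ι)
    (hx : IsWeightVector L h η p x) :
    η k • sbL n (f (h i) (h j)) x = η i • sbL n (f (h k) (h j)) x := by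
  have hu : ∀ a, f (h a) (h j) ∈ epar n (0 + pf) := fun a =>
    hf.apply_torus_left_mem_epar hT a (hT.mem j)
  have hv : ∀ a, f (h a) x ∈ epar n (p + pf) := fun a => hf.apply_torus_left_mem_epar hT a hx.mem
  have had : sbL n (h k) (sbL n (f (h i) (h j)) x) = sbL n (h i) (sbL n (f (h k) (h j)) x) := by
    rw [hf.sbL_apply_eq_left hT i j hx, hf.sbL_apply_eq_left hT k j hx, map_sub, map_sub, map_smul,
      map_smul, hT.sbL_comm k j (hv i), hT.sbL_comm i j (hv k),
      hf.sbL_apply_left_comm hT k i hx.mem]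
  rwa [hT.sbL_sbL k (hu i) hx, hT.sbL_sbL i (hu k) hx,
    hf.sbL_apply_left_comm hT k i (hT.mem j), add_right_inj] at had

lemma IsSuperBider.smul_sbL_apply_right (hf : IsSuperBider n L pf f) (hT : IsTorus L h)
    (i j l : ι) (hx : IsWeightVector L h η p x) :
    η l • sbL n (f (h i) (h j)) x = η j • sbL n (f (h i) (h l)) x := by
  have hu : ∀ a, f (h i) (h a) ∈ epar n (0 + pf) := fun a =>
    hf.apply_torus_right_mem_epar hT a (hT.mem i)
  have hv : ∀ a, f x (h a) ∈ epar n (p + pf) := fun a => hf.apply_torus_right_mem_epar hT a hx.mem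
  have had : sbL n (h l) (sbL n (f (h i) (h j)) x) = sbL n (h j) (sbL n (f (h i) (h l)) x) := by
    rw [hf.sbL_apply_eq_right hT i j hx, hf.sbL_apply_eq_right hT i l hx, map_sub, map_sub,
      map_smul, map_smul, hT.sbL_comm l i (hv j), hT.sbL_comm j i (hv l),
      hf.sbL_apply_right_comm hT l j hx.mem]
  rwa [hT.sbL_sbL l (hu j) hx, hT.sbL_sbL j (hu l) hx,
    hf.sbL_apply_right_comm hT l j (hT.mem i), add_right_inj] at had

lemma IsSuperBider.mul_smul_sbL_apply (hf : IsSuperBider n L pf f) (hT : IsTorus L h)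
    (i j k l : ι) (hx : IsWeightVector L h η p x) :
    (η k * η l) • sbL n (f (h i) (h j)) x = (η i * η j) • sbL n (f (h k) (h l)) x := by
  rw [mul_comm (η k), mul_smul, hf.smul_sbL_apply_left hT i j k hx, smul_comm,
    hf.smul_sbL_apply_right hT k j l hx, smul_smul]

lemma IsSuperBider.sbL_apply_eq_zero_of_weight (hf : IsSuperBider n L pf f) (hT : IsTorus L h)
    {i j : ι} (hx : IsWeightVector L h η p x) {k : ι} (hk : η k ≠ 0) (hij : η i * η j = 0) :
    sbL n (f (h i) (h j)) x = 0 := by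
  have := hf.mul_smul_sbL_apply hT i j k k hx
  rw [hij, zero_smul] at this
  exact (smul_eq_zero.1 this).resolve_left (mul_ne_zero hk hk)

theorem IsSuperBider.sbL_apply_eq_zero (hf : IsSuperBider n L pf f) (hT : IsTorus L h)
    (hz : IsIndepBracket L h x z) (i j : ι) : sbL n (f (h i) (h j)) z = 0 := by
  obtain ⟨hzL, η, ζ, p, q, y, hx, hy, ⟨⟨a, ha, ha'⟩, b, hb, hb'⟩, rfl⟩ := hz
  have hux : sbL n (f (h a) (h b)) x = 0 :=
    hf.sbL_apply_eq_zero_of_weight hT hx ha (by rw [hb, mul_zero])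
  have huy : sbL n (f (h a) (h b)) y = 0 :=
    hf.sbL_apply_eq_zero_of_weight hT hy hb' (by rw [ha', zero_mul])
  have huz : sbL n (f (h a) (h b)) (sbL n x y) = 0 := by
    rw [sbL_jacobi (hf.apply_torus_left_mem_epar hT a (hT.mem b)) hx.mem.2 hy.mem.2, hux, huy,
      map_zero, map_zero, LinearMap.zero_apply, smul_zero, add_zero]
  have := hf.mul_smul_sbL_apply hT i j a b (hT.isWeightVector_sbL hx hy hzL)
  rw [huz, smul_zero, Pi.add_apply, Pi.add_apply, ha', hb, add_zero, zero_add] at this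
  exact (smul_eq_zero.1 this).resolve_left (mul_ne_zero ha hb')

lemma IsSuperBider.eq_zero_or_of_isScalarOnTorus (hf : IsSuperBider n L pf f) (hT : IsTorus L h)
    (hx : IsWeightVector L h η p x) (hx0 : x ≠ 0) {i : ι} (hi : η i ≠ 0)
    (hsc : IsScalarOnTorus f h c x) : c = 0 ∨ pf = 0 := by
  refine or_iff_not_imp_right.2 fun hpf => ?_
  have hpf : pf = 1 := Fin.eq_one_of_ne_zero pf hpf
  have hmem : f (h i) x ∈ epar n (p + pf) := hf.apply_torus_left_mem_epar hT i hx.mem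
  rw [hsc i, hx.sbL_eq, smul_smul, hpf] at hmem
  have := eq_zero_of_mem_epar_of_mem_epar (Submodule.smul_mem _ (c * η i) hx.mem.2) hmem
  simpa [hx0, hi] using this

lemma IsSuperBider.smul_apply_comm (hf : IsSuperBider n L pf f) (hT : IsTorus L h)
    (hu : ∀ i j, f (h i) (h j) = 0) (i k : ι) (hx : IsWeightVector L h η p x) :
    η i • f (h k) x = η k • f (h i) x := by
  have had : ∀ a b, sbL n (h a) (f (h b) x) = η a • f (h b) x := fun a b => by
    have := hf.sbL_apply_eq_left hT b a hx
    rw [hu, map_zero, LinearMap.zero_apply] at this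
    exact (sub_eq_zero.1 this.symm).symm
  rw [← had, ← had, hf.sbL_apply_left_comm hT i k hx.mem]

lemma IsSuperBider.isScalarOnTorus_of_apply (hf : IsSuperBider n L pf f) (hT : IsTorus L h)
    (hu : ∀ i j, f (h i) (h j) = 0) (hx : IsWeightVector L h η p x) {k : ι} (hk : η k ≠ 0)
    (hc : f (h k) x = (c * η k) • x) : IsScalarOnTorus f h c x := fun i => by
  refine smul_right_injective (E n) hk ?_
  calc η k • f (h i) x = η i • f (h k) x := hf.smul_apply_comm hT hu k i hx
    _ = η k • c • sbL n (h i) x := by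
      rw [hc, hx.sbL_eq, smul_smul, smul_smul, smul_smul]
      ring_nf

lemma IsSuperBider.isScalarOnTorus_of_isIndepBracket (hf : IsSuperBider n L pf f)
    (hT : IsTorus L h) (hu : ∀ i j, f (h i) (h j) = 0) (hz : IsIndepBracket L h x z)
    (hsc : IsScalarOnTorus f h c x) : IsScalarOnTorus f h c z := by
  obtain ⟨hzL, η, ζ, p, q, y, hx, hy, ⟨⟨a, ha, ha'⟩, b, -, hb'⟩, rfl⟩ := hz
  have hay : f (h a) y = 0 := by
    have := hf.smul_apply_comm hT hu b a hy
    rw [ha', zero_smul] at this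
    exact (smul_eq_zero.1 this).resolve_left hb'
  refine hf.isScalarOnTorus_of_apply hT hu (hT.isWeightVector_sbL hx hy hzL) (k := a)
    (by simpa [ha'] using ha) ?_
  rw [hf.eq2 0 p q _ (hT.mem a) x hx.mem y hy.mem, hay, map_zero, smul_zero, add_zero, hsc a,
    hx.sbL_eq, Pi.add_apply, ha', add_zero, smul_smul, map_smul, LinearMap.smul_apply]

end Torus

section Generators

variable {ι : Type*} {L : Submodule ℂ (E n)} {h : ι → E n} {η ζ : ι → ℂ} {p q pf : ZMod 2}
  {x y z : E n} {f : E n →ₗ[ℂ] E n →ₗ[ℂ] E n} {c : ℂ} {G : Set (E n)}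

lemma mul_sgn_mul_of_eq_zero_or (hc : c = 0 ∨ pf = 0) (p : ZMod 2) : c * sgn (pf * p) = c := by
  rcases hc with rfl | rfl
  · rw [zero_mul]
  · rw [zero_mul, sgn_zero, mul_one]

lemma GeneratedBy.le_sup_epar (hG : GeneratedBy L G) (hhom : ∀ g ∈ G, ∃ p, g ∈ L ⊓ epar n p) :
    L ≤ (L ⊓ epar n 0) ⊔ (L ⊓ epar n 1) := by
  have hle : ∀ p, L ⊓ epar n p ≤ (L ⊓ epar n 0) ⊔ (L ⊓ epar n 1) := fun p => by
    fin_cases p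
    · exact le_sup_left
    · exact le_sup_right
  refine hG _ (fun g hg => ?_) fun p q a ha b hb _ _ hab =>
    hle (p + q) ⟨hab, sbL_mem_epar ha.2 hb.2⟩
  obtain ⟨p, hp⟩ := hhom g hg
  exact hle p hp

lemma IsIndepBracket.exists_isWeightVector (hT : IsTorus L h) (hz : IsIndepBracket L h x z) :
    ∃ η p, IsWeightVector L h η p z := by
  obtain ⟨hzL, η, ζ, p, q, y, hx, hy, -, rfl⟩ := hz
  exact ⟨_, _, hT.isWeightVector_sbL hx hy hzL⟩

lemma IsSuperBider.isScalarOnTorus_of_generatedBy (hf : IsSuperBider n L pf f)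
    (hT : IsTorus L h) (hc : c = 0 ∨ pf = 0) (hG : GeneratedBy L G)
    (hsc : ∀ g ∈ G, IsScalarOnTorus f h c g) (hx : x ∈ L) : IsScalarOnTorus f h c x := fun i => by
  let P : Submodule ℂ (E n) := LinearMap.ker (f (h i) - c • sbL n (h i))
  suffices L ≤ P from sub_eq_zero.1 (this hx)
  refine hG P (fun g hg => sub_eq_zero.2 (hsc g hg i)) fun p q a ha b hb haP hbP _ =>
    sub_eq_zero.2 ?_
  have ha' : f (h i) a = c • sbL n (h i) a := sub_eq_zero.1 haP
  have hb' : f (h i) b = c • sbL n (h i) b := sub_eq_zero.1 hbP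
  rw [hf.eq2 0 p q _ (hT.mem i) a ha b hb, ha', hb', add_zero, map_smul, LinearMap.smul_apply,
    map_smul, smul_smul, mul_comm (sgn _), mul_sgn_mul_of_eq_zero_or hc, ← smul_add,
    ← sbL_jacobi_even (hT.mem i).2 ha.2 hb.2]
  rfl

/-- The deviation of `f (y, ·)` from the inner super-biderivation `c [y, ·]`. It is a
superderivation, which vanishes identically if and only if `f (y, ·) = c [y, ·]`. -/
def defect (f : E n →ₗ[ℂ] E n →ₗ[ℂ] E n) (c : ℂ) (y : E n) : E n →ₗ[ℂ] E n := f y - c • sbL n y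

lemma defect_apply (y x : E n) : defect f c y x = f y x - c • sbL n y x := rfl

lemma IsSuperBider.defect_mem_epar (hf : IsSuperBider n L pf f) (hc : c = 0 ∨ pf = 0)
    (hy : y ∈ L ⊓ epar n q) (hx : x ∈ L ⊓ epar n p) : defect f c y x ∈ epar n (pf + q + p) := by
  refine Submodule.sub_mem _ ?_ ?_
  · rw [add_assoc, add_comm]
    exact (hf.maps q p y hy x hx).2
  · rcases hc with rfl | rfl
    · rw [zero_smul]
      exact Submodule.zero_mem _
    · rw [zero_add]
      exact Submodule.smul_mem _ _ (sbL_mem_epar hy.2 hx.2)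

lemma IsSuperBider.defect_sbL (hf : IsSuperBider n L pf f) (hc : c = 0 ∨ pf = 0) {x' : E n}
    {p' : ZMod 2} (hy : y ∈ L ⊓ epar n q) (hx : x ∈ L ⊓ epar n p) (hx' : x' ∈ L ⊓ epar n p') :
    defect f c y (sbL n x x') =
      sbL n (defect f c y x) x' + sgn ((pf + q) * p) • sbL n x (defect f c y x') := by
  have hsgn : c * sgn ((pf + q) * p) = c * sgn (q * p) := by
    rw [add_mul, sgn_add, ← mul_assoc, mul_sgn_mul_of_eq_zero_or hc]
  simp only [defect_apply, map_sub, map_smul, LinearMap.sub_apply, LinearMap.smul_apply]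
  rw [hf.eq2 q p p' y hy x hx x' hx', sbL_jacobi hy.2 hx.2 hx'.2, smul_add, smul_sub, smul_smul,
    smul_smul, mul_comm _ c, hsgn]
  module

lemma IsSuperBider.sbL_torus_defect (hf : IsSuperBider n L pf f) (hT : IsTorus L h)
    (hy : IsWeightVector L h ζ q y) (hx : x ∈ L ⊓ epar n p) (hsc : IsScalarOnTorus f h c x)
    (i : ι) : sbL n (h i) (defect f c y x) = ζ i • defect f c y x := by
  have h1 := hf.eq1 0 q p _ (hT.mem i) y hy.mem x hx
  have hjac := sbL_jacobi_right (hT.mem i).2 hy.mem.2 hx.2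
  rw [hy.sbL_eq, map_smul, LinearMap.smul_apply] at h1 hjac
  rw [zero_mul, sgn_zero, one_smul, hsc i, map_smul, LinearMap.smul_apply] at h1
  simp only [defect_apply, map_sub, map_smul, smul_sub]
  rw [h1, smul_comm (ζ i) c, hjac]
  module

lemma IsSuperBider.sbL_defect_torus (hf : IsSuperBider n L pf f) (hT : IsTorus L h)
    (hc : c = 0 ∨ pf = 0) (hy : IsWeightVector L h ζ q y) (hx : IsWeightVector L h η p x)
    (hsc : IsScalarOnTorus f h c x) (i : ι) :
    sbL n (defect f c y (h i)) x = (η i - ζ i) • defect f c y x := by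
  have hD := hf.defect_sbL hc hy.mem (hT.mem i) hx.mem
  rw [hx.sbL_eq, map_smul, mul_zero, sgn_zero, one_smul,
    hf.sbL_torus_defect hT hy hx.mem hsc] at hD
  linear_combination (norm := module) (-1 : ℂ) • hD

/- Both sides of `[D h_i, [x, y]]` can be evaluated, by the Leibniz rule for `D` and by the Jacobi
identity; the difference is a relation between `[D x, y]` and `[x, D y]` for every `i`. -/
theorem IsSuperBider.defect_eq_zero (hf : IsSuperBider n L pf f) (hT : IsTorus L h)
    (hc : c = 0 ∨ pf = 0) (hsc : ∀ x ∈ L, IsScalarOnTorus f h c x) {w : E n} {θ : ι → ℂ}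
    {r : ZMod 2} (hw : IsWeightVector L h θ r w) (hz : IsIndepBracket L h x z) :
    defect f c w z = 0 := by
  obtain ⟨hzL, η, ζ, p, q, y, hx, hy, ⟨⟨a, ha, ha'⟩, b, hb, hb'⟩, rfl⟩ := hz
  have hleib := hf.defect_sbL hc hw.mem hx.mem hy.mem
  have hrel : ∀ i, ζ i • sbL n (defect f c w x) y +
      (η i * sgn ((pf + r) * p)) • sbL n x (defect f c w y) = 0 := fun i => by
    have h1 := hf.sbL_defect_torus hT hc hw (hT.isWeightVector_sbL hx hy hzL) (hsc _ hzL) i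
    have hDi : defect f c w (h i) ∈ epar n (pf + r) :=
      add_zero (pf + r) ▸ hf.defect_mem_epar hc hw.mem (hT.mem i)
    rw [sbL_jacobi hDi hx.mem.2 hy.mem.2, hf.sbL_defect_torus hT hc hw hx (hsc _ hx.mem.1),
      hf.sbL_defect_torus hT hc hw hy (hsc _ hy.mem.1), hleib, Pi.add_apply, map_smul,
      LinearMap.smul_apply, map_smul] at h1
    linear_combination (norm := module) (-1 : ℂ) • h1
  have hDx : sbL n (defect f c w x) y = 0 := by
    simpa [hb, hb'] using hrel b
  have hDy : sgn ((pf + r) * p) • sbL n x (defect f c w y) = 0 := by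
    have := hrel a
    rw [ha', zero_smul, zero_add, mul_smul] at this
    exact (smul_eq_zero.1 this).resolve_left ha
  rw [hleib, hDx, hDy, add_zero]

lemma IsSuperBider.apply_eq_smul_sbL_of_isWeightVector (hf : IsSuperBider n L pf f)
    (hc : c = 0 ∨ pf = 0) (hG : GeneratedBy L G) (hy : y ∈ L ⊓ epar n q)
    (hD : ∀ g ∈ G, defect f c y g = 0) (hx : x ∈ L) : f y x = c • sbL n y x := by
  suffices L ≤ LinearMap.ker (defect f c y) from sub_eq_zero.1 (this hx)
  refine hG _ hD fun p p' a ha b hb haP hbP _ => ?_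
  rw [LinearMap.mem_ker, hf.defect_sbL hc hy ha hb, LinearMap.mem_ker.1 haP,
    LinearMap.mem_ker.1 hbP, map_zero, map_zero, LinearMap.zero_apply, smul_zero, add_zero]

theorem IsSuperBider.apply_eq_smul_sbL (hf : IsSuperBider n L pf f) (hT : IsTorus L h)
    (hu : ∀ i j, f (h i) (h j) = 0) (hc : c = 0 ∨ pf = 0) (hG : GeneratedBy L G)
    (hbr : ∀ g ∈ G, ∃ x, IsScalarOnTorus f h c x ∧ IsIndepBracket L h x g) (hx : x ∈ L)
    (hy : y ∈ L) : f x y = c • sbL n x y := by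
  have hsc : ∀ x ∈ L, IsScalarOnTorus f h c x := fun x =>
    hf.isScalarOnTorus_of_generatedBy hT hc hG fun g hg => by
      obtain ⟨w, hw, hwg⟩ := hbr g hg
      exact hf.isScalarOnTorus_of_isIndepBracket hT hu hwg hw
  have hGw : ∀ g ∈ G, ∃ η p, IsWeightVector L h η p g := fun g hg => by
    obtain ⟨w, -, hwg⟩ := hbr g hg
    exact hwg.exists_isWeightVector hT
  have hdec := hG.le_sup_epar fun g hg => by
    obtain ⟨η, p, hg⟩ := hGw g hg
    exact ⟨p, hg.mem⟩
  suffices hhom : ∀ p, ∀ z ∈ L ⊓ epar n p, f x z = c • sbL n x z by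
    obtain ⟨y₀, hy₀, y₁, hy₁, rfl⟩ := Submodule.mem_sup.1 (hdec hy)
    rw [map_add, map_add, hhom 0 y₀ hy₀, hhom 1 y₁ hy₁, smul_add]
  intro r z hz
  suffices L ≤ LinearMap.ker (f.flip z - c • (sbL n).flip z) from sub_eq_zero.1 (this hx)
  refine hG _ (fun g hg => ?_) fun p q a ha b hb haP hbP _ => sub_eq_zero.2 ?_
  · obtain ⟨η, p, hgw⟩ := hGw g hg
    exact sub_eq_zero.2 <| hf.apply_eq_smul_sbL_of_isWeightVector hc hG hgw.mem (fun g hg => by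
      obtain ⟨w, -, hwg⟩ := hbr g hg
      exact hf.defect_eq_zero hT hc hsc hgw hwg) hz.1
  · have ha' : f a z = c • sbL n a z := sub_eq_zero.1 haP
    have hb' : f b z = c • sbL n b z := sub_eq_zero.1 hbP
    rw [LinearMap.flip_apply, hf.eq1 p q r a ha b hb z hz, ha', hb', map_smul, map_smul,
      LinearMap.smul_apply, smul_smul, mul_comm _ c, mul_comm p, mul_sgn_mul_of_eq_zero_or hc,
      smul_comm, ← smul_add, ← sbL_jacobi_right ha.2 hb.2 hz.2]
    rfl

end Generators

/-! ### Brackets of vector fields -/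

lemma linField_apply (i k : Fin n) (g : Lambda n) : linField i k g = mulX i (pd n k g) := rfl

lemma Wmap_eq_sum (F : Fin n → Lambda n) : Wmap n F = ∑ i, vecField i (F i) := rfl

lemma vecField_eq_Wmap (k : Fin n) (g : Lambda n) : vecField k g = Wmap n (Pi.single k g) := by
  rw [Wmap_eq_sum, Finset.sum_eq_single k
    (fun i _ hi => by rw [Pi.single_eq_of_ne hi, map_zero]) (by simp), Pi.single_eq_same]

lemma vecField_mem_Wn (k : Fin n) (g : Lambda n) : vecField k g ∈ Wn n :=
  ⟨_, (vecField_eq_Wmap k g).symm⟩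

lemma vecField_mono_empty (k : Fin n) : vecField k (mono n ∅) = pd n k := by
  change mulOp n (mono n ∅) * pd n k = pd n k
  rw [mulOp_mono_empty, one_mul]

lemma vecField_injective (k : Fin n) : Function.Injective (vecField k) := fun g g' h => by
  have h := LinearMap.congr_fun h (mono n {k})
  change mulOp n g (pd n k (mono n {k})) = mulOp n g' (pd n k (mono n {k})) at h
  rwa [pd_mono_singleton, if_pos rfl, mulOp_apply_mono_empty, mulOp_apply_mono_empty] at h

lemma Wmap_apply_mono_singleton (F : Fin n → Lambda n) (k : Fin n) :
    Wmap n F (mono n {k}) = F k := by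
  change (∑ i, mulOp n (F i) * pd n i) (mono n {k}) = F k
  simp [pd_mono_singleton, apply_ite, mulOp_apply_mono_empty]

lemma Wmap_injective : Function.Injective (Wmap n) := fun F G h => funext fun k => by
  rw [← Wmap_apply_mono_singleton F, h, Wmap_apply_mono_singleton]

/-- The diagonal vector field `∑ a_i x_i ∂_i`. -/
def diagField (a : Fin n → ℂ) : E n := ∑ i, a i • linField i i

lemma linField_mul_sub_mul (i j k : Fin n) (g : Lambda n) :
    linField i k * vecField j g - vecField j g * linField i k =
      vecField j (linField i k g) - if i = j then vecField k g else 0 := by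
  have hδ : (if i = j then vecField k g else 0) =
      mulOp n g * (if j = i then 1 else 0) * pd n k := by
    rcases eq_or_ne i j with rfl | hij
    · rw [if_pos rfl, if_pos rfl, mul_one]; rfl
    · rw [if_neg hij, if_neg hij.symm, mul_zero, zero_mul]
  have hcomm := pd_mul_mulX j i
  rw [hδ, linField_apply]
  change mulX i * pd n k * (mulOp n g * pd n j) - mulOp n g * pd n j * (mulX i * pd n k) =
    mulOp n (mulX i (pd n k g)) * pd n j - _
  rw [mulOp_mulX_apply]
  generalize (if j = i then 1 else 0 : E n) = δ at hcomm ⊢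
  calc mulX i * pd n k * (mulOp n g * pd n j) - mulOp n g * pd n j * (mulX i * pd n k)
      = mulX i * (pd n k * mulOp n g) * pd n j - mulOp n g * (pd n j * mulX i) * pd n k := by
        noncomm_ring
    _ = mulX i * mulOp n (pd n k g) * pd n j - mulOp n g * δ * pd n k +
        (mulX i * mulOp n (par n g) * (pd n k * pd n j) +
          mulOp n g * mulX i * (pd n j * pd n k)) := by
        rw [pd_mul_mulOp, hcomm]; noncomm_ring
    _ = mulX i * mulOp n (pd n k g) * pd n j - mulOp n g * δ * pd n k := by
        rw [mulX_mul_mulOp_par, pd_mul_pd k j]; noncomm_ring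

theorem sbL_linField_vecField (i j k : Fin n) (g : Lambda n) :
    sbL n (linField i k) (vecField j g) =
      vecField j (linField i k g) - if i = j then vecField k g else 0 := by
  rw [sbL_even_left (linField_mem_epar i k), linField_mul_sub_mul]

lemma sbL_linField_linField {i j k : Fin n} (hik : i ≠ k) :
    sbL n (linField i j) (linField j k) = linField i k := by
  rw [sbL_linField_vecField, if_neg hik, sub_zero, linField_apply, pd_mono_singleton, if_pos rfl,
    mulX_mono_of_notMem (Finset.notMem_empty i)]
  simp [crossSign, msign]

lemma sbL_linField_Wmap (i k : Fin n) (F : Fin n → Lambda n) :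
    sbL n (linField i k) (Wmap n F) =
      Wmap n fun j => linField i k (F j) - if j = k then F i else 0 := by
  rw [Wmap_eq_sum, Wmap_eq_sum]
  have hite : ∀ j, vecField j (if j = k then F i else 0) = if j = k then vecField j (F i) else 0 :=
    fun j => by split_ifs <;> simp
  simp only [map_sum, sbL_linField_vecField, map_sub, Finset.sum_sub_distrib, hite,
    Finset.sum_ite_eq, Finset.sum_ite_eq', Finset.mem_univ, if_true]

lemma diagField_apply_mono (a : Fin n → ℂ) (S : Finset (Fin n)) :
    diagField a (mono n S) = (∑ i ∈ S, a i) • mono n S := by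
  have hlin : ∀ i, linField i i (mono n S) = if i ∈ S then mono n S else 0 := fun i => by
    rw [linField_apply]
    split_ifs with hi
    · rw [← Finset.insert_erase hi, pd_mono_insert (Finset.notMem_erase i S), map_smul,
        mulX_mono_of_notMem (Finset.notMem_erase i S), smul_smul, crossSign_mul_self, one_smul]
    · rw [pd_mono_of_notMem hi, map_zero]
  simp only [diagField, LinearMap.sum_apply, LinearMap.smul_apply, hlin, smul_ite, smul_zero,
    ← Finset.sum_filter, Finset.filter_univ_mem, Finset.sum_smul]

lemma diagField_apply (a : Fin n → ℂ) (g : Lambda n) (S : Finset (Fin n)) :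
    diagField a g S = (∑ i ∈ S, a i) * g S := by
  conv_lhs => rw [← sum_smul_mono g]
  simp [diagField_apply_mono, mono_apply, mul_comm]

lemma diagField_mem_epar (a : Fin n → ℂ) : diagField a ∈ epar n 0 :=
  Submodule.sum_mem _ fun i _ => Submodule.smul_mem _ _ (linField_mem_epar i i)

lemma sbL_diagField_vecField (a : Fin n → ℂ) (j : Fin n) (g : Lambda n) :
    sbL n (diagField a) (vecField j g) = vecField j (diagField a g) - a j • vecField j g := by
  simp [diagField, sbL_linField_vecField, smul_sub, Finset.sum_sub_distrib]

lemma sbL_diagField_vecField_mono (a : Fin n → ℂ) (j : Fin n) (S : Finset (Fin n)) :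
    sbL n (diagField a) (vecField j (mono n S)) =
      ((∑ i ∈ S, a i) - a j) • vecField j (mono n S) := by
  rw [sbL_diagField_vecField, diagField_apply_mono, map_smul]
  module

lemma sbL_diagField_Wmap (a : Fin n → ℂ) (F : Fin n → Lambda n) :
    sbL n (diagField a) (Wmap n F) = Wmap n fun j => diagField a (F j) - a j • F j := by
  simp only [Wmap_eq_sum, map_sum, sbL_diagField_vecField, map_sub, map_smul]

lemma sbL_diagField_diagField (a b : Fin n → ℂ) : sbL n (diagField a) (diagField b) = 0 := by
  conv_lhs => rw [diagField.eq_1 b]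
  simp [sbL_diagField_vecField_mono]

theorem sbL_pd_vecField (j k : Fin n) {q : ZMod 2} {g : Lambda n} (hg : g ∈ lpar n q) :
    sbL n (pd n j) (vecField k g) = vecField k (pd n j g) := by
  rw [sbL_of_mem_epar (pd_mem_epar j) (vecField_mem_epar hg k), one_mul, sgn_add, sgn_one,
    mul_neg_one]
  change pd n j * (mulOp n g * pd n k) - -sgn q • (mulOp n g * pd n k * pd n j) =
    mulOp n (pd n j g) * pd n k
  rw [← mul_assoc, pd_mul_mulOp, add_mul, mul_assoc, mul_assoc, pd_mul_pd k j,
    par_apply_of_mem_lpar hg, map_smul, smul_mul_assoc, mul_neg]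
  module

/-! ### The diagonal torus -/

/-- The diagonal coefficients of trace zero. The vector fields `∑ a_i x_i ∂_i` with such
coefficients are the diagonal elements of the copy of `sl(n)` spanned by linear vector fields. -/
abbrev traceZero (n : ℕ) : Submodule ℂ (Fin n → ℂ) := LinearMap.ker (∑ i, LinearMap.proj i)

lemma mem_traceZero {a : Fin n → ℂ} : a ∈ traceZero n ↔ ∑ i, a i = 0 := by
  simp [LinearMap.sum_apply]

/-- The diagonal elements of `sl(n)`, as a family indexed by their coefficients. -/
def torus (n : ℕ) (a : traceZero n) : E n := diagField a

/-- The coroot `e_i - e_j` of `sl(n)`; sums of coroots serve as test points for weights. -/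
def coroot (i j : Fin n) : traceZero n :=
  ⟨Pi.single i 1 - Pi.single j 1, by simp [LinearMap.sum_apply]⟩

/-- The weight `a_i - a_k` of the linear vector field `x_i ∂_k`. -/
def rootWeight (i k : Fin n) (a : traceZero n) : ℂ := a.1 i - a.1 k

lemma coroot_apply (i j l : Fin n) :
    (coroot i j).1 l = (if l = i then 1 else 0) - if l = j then 1 else 0 := by
  simp [coroot, Pi.single_apply]

lemma sum_coroot (i j : Fin n) (S : Finset (Fin n)) :
    ∑ l ∈ S, (coroot i j).1 l = (if i ∈ S then 1 else 0) - if j ∈ S then 1 else 0 := by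
  simp [coroot_apply, Finset.sum_sub_distrib]

lemma rootWeight_coroot {i k : Fin n} (hik : i ≠ k) : rootWeight i k (coroot i k) = 2 := by
  norm_num [rootWeight, coroot_apply, hik, hik.symm]

lemma indepWeights_rootWeight_rootWeight {i j k : Fin n} (hij : i ≠ j) (hjk : j ≠ k) (hik : i ≠ k) :
    IndepWeights (rootWeight i j) (rootWeight j k) := by
  refine ⟨⟨coroot j i + coroot k i, ?_⟩, coroot i k + coroot j k, ?_⟩ <;>
    norm_num [rootWeight, coroot_apply, hij, hij.symm, hjk, hjk.symm, hik, hik.symm]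

lemma indepWeights_rootWeight_neg {i k l : Fin n} (hik : i ≠ k) (hil : i ≠ l) (hkl : k ≠ l) :
    IndepWeights (rootWeight i k) fun a => -a.1 i := by
  refine ⟨⟨coroot k l, ?_⟩, coroot i l + coroot k l, ?_⟩ <;>
    simp [rootWeight, coroot_apply, hik, hik.symm, hil, hkl]

lemma indepWeights_rootWeight_sum {i k : Fin n} (hik : i ≠ k) {R : Finset (Fin n)}
    (hR : R.Nonempty) (hi : i ∉ R) (hk : k ∉ R) :
    IndepWeights (rootWeight i k) fun a => ∑ l ∈ R, a.1 l := by
  obtain ⟨r, hr⟩ := hR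
  have hir : i ≠ r := fun h => hi (h ▸ hr)
  have hkr : k ≠ r := fun h => hk (h ▸ hr)
  refine ⟨⟨coroot i k, ?_⟩, coroot i r + coroot k r, ?_⟩
  · simp [rootWeight_coroot hik, sum_coroot, hi, hk]
  · simp [rootWeight, coroot_apply, Finset.sum_add_distrib, hi, hk, hr, hik, hik.symm, hir, hkr]

lemma exists_ne_ne (hn : 3 ≤ n) (i k : Fin n) : ∃ j, j ≠ i ∧ j ≠ k := by
  obtain ⟨j, -, hj⟩ := Finset.exists_mem_notMem_of_card_lt_card (s := {i, k}) (t := Finset.univ)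
    ((Finset.card_le_two).trans_lt (by rwa [Finset.card_univ, Fintype.card_fin]))
  exact ⟨j, by simpa using hj⟩

/-! ### Subspaces of `W(n)` that contain `sl(n)` -/

/-- Subspaces of `W(n)` that contain the copy of `sl(n)` spanned by linear vector fields. -/
structure ContainsSl (L : Submodule ℂ (E n)) : Prop where
  le_Wn : L ≤ Wn n
  diagField_mem : ∀ a ∈ traceZero n, diagField a ∈ L
  linField_mem : ∀ i k, i ≠ k → linField i k ∈ L

section Brackets

variable {ι : Type*} {L : Submodule ℂ (E n)} {h : ι → E n} {η ζ : ι → ℂ} {p q : ZMod 2} {x y : E n}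

lemma IsWeightVector.smul (hx : IsWeightVector L h η p x) (c : ℂ) :
    IsWeightVector L h η p (c • x) where
  mem := Submodule.smul_mem _ c hx.mem
  sbL_eq i := by rw [map_smul, hx.sbL_eq, smul_comm]

lemma isIndepBracket_left (hx : IsWeightVector L h η p x) (hy : IsWeightVector L h ζ q y)
    (hηζ : IndepWeights η ζ) {c : ℂ} (hL : c • sbL n x y ∈ L) :
    IsIndepBracket L h x (c • sbL n x y) :=
  ⟨hL, η, ζ, p, q, c • y, hx, hy.smul c, hηζ, map_smul _ _ _⟩

lemma isIndepBracket_right (hx : IsWeightVector L h η 0 x) (hy : IsWeightVector L h ζ q y)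
    (hηζ : IndepWeights η ζ) (hL : sbL n x y ∈ L) : IsIndepBracket L h y (sbL n x y) := by
  have h := isIndepBracket_left hy hx hηζ.symm (c := -1)
    (by simpa [sbL_skew_of_even_left hx.mem.2 y] using hL)
  simpa [sbL_skew_of_even_left hx.mem.2 y] using h

end Brackets

variable {L : Submodule ℂ (E n)}

namespace ContainsSl

lemma isTorus (hL : ContainsSl L) : IsTorus L (torus n) where
  mem a := ⟨hL.diagField_mem _ a.2, diagField_mem_epar _⟩
  comm _ _ := sbL_diagField_diagField _ _

lemma isWeightVector_linField (hL : ContainsSl L) {i k : Fin n} (hik : i ≠ k) :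
    IsWeightVector L (torus n) (rootWeight i k) 0 (linField i k) where
  mem := ⟨hL.linField_mem i k hik, linField_mem_epar i k⟩
  sbL_eq a := by
    rw [torus, sbL_diagField_vecField_mono, Finset.sum_singleton, rootWeight]

lemma isIndepBracket_linField_left (hL : ContainsSl L) {i j k : Fin n} (hij : i ≠ j)
    (hjk : j ≠ k) (hik : i ≠ k) : IsIndepBracket L (torus n) (linField i j) (linField i k) := by
  have h := isIndepBracket_left (c := 1) (hL.isWeightVector_linField hij)
    (hL.isWeightVector_linField hjk) (indepWeights_rootWeight_rootWeight hij hjk hik)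
  rw [one_smul, sbL_linField_linField hik] at h
  exact h (hL.linField_mem i k hik)

lemma isIndepBracket_linField_right (hL : ContainsSl L) {i j k : Fin n} (hij : i ≠ j)
    (hjk : j ≠ k) (hik : i ≠ k) : IsIndepBracket L (torus n) (linField j k) (linField i k) := by
  have h := isIndepBracket_right (hL.isWeightVector_linField hij)
    (hL.isWeightVector_linField hjk) (indepWeights_rootWeight_rootWeight hij hjk hik)
  rw [sbL_linField_linField hik] at h
  exact h (hL.linField_mem i k hik)

lemma isScalarOnTorus_linField (hL : ContainsSl L) (hn : 3 ≤ n) {pf : ZMod 2}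
    {f : E n →ₗ[ℂ] E n →ₗ[ℂ] E n} (hf : IsSuperBider n L pf f)
    (hu : ∀ a b, f (torus n a) (torus n b) = 0) {c : ℂ} {i₀ k₀ : Fin n} (h₀ : i₀ ≠ k₀)
    (hsc : IsScalarOnTorus f (torus n) c (linField i₀ k₀)) {i k : Fin n} (hik : i ≠ k) :
    IsScalarOnTorus f (torus n) c (linField i k) := by
  have hrow : ∀ {i j k}, i ≠ j → i ≠ k → IsScalarOnTorus f (torus n) c (linField i j) →
      IsScalarOnTorus f (torus n) c (linField i k) := fun {i j k} hij hik h => by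
    rcases eq_or_ne j k with rfl | hjk
    · exact h
    · exact hf.isScalarOnTorus_of_isIndepBracket hL.isTorus hu
        (hL.isIndepBracket_linField_left hij hjk hik) h
  have hcol : ∀ {i j k}, j ≠ k → i ≠ k → IsScalarOnTorus f (torus n) c (linField j k) →
      IsScalarOnTorus f (torus n) c (linField i k) := fun {i j k} hjk hik h => by
    rcases eq_or_ne i j with rfl | hij
    · exact h
    · exact hf.isScalarOnTorus_of_isIndepBracket hL.isTorus hu
        (hL.isIndepBracket_linField_right hij hjk hik) h
  obtain ⟨l, hli₀, hli⟩ := exists_ne_ne hn i₀ i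
  exact hrow hli.symm hik (hcol hli₀.symm hli.symm (hrow h₀ hli₀.symm hsc))

end ContainsSl

/-- The elements of `Λ(n)` annihilated by `sl(n)`. -/
def slInvariants (n : ℕ) : Submodule ℂ (Lambda n) :=
  (⨅ (i) (k) (_ : i ≠ k), LinearMap.ker (linField i k)) ⊓
    ⨅ a : traceZero n, LinearMap.ker (torus n a)

lemma mem_slInvariants {g : Lambda n} :
    g ∈ slInvariants n ↔ (∀ i k, i ≠ k → linField i k g = 0) ∧ ∀ a, torus n a g = 0 := by
  simp [slInvariants]

lemma mono_empty_mem_slInvariants : mono n ∅ ∈ slInvariants n := by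
  refine mem_slInvariants.2 ⟨fun i k _ => ?_, fun a => ?_⟩
  · rw [linField_apply, pd_mono_of_notMem (Finset.notMem_empty k), map_zero]
  · rw [torus, diagField_apply_mono, Finset.sum_empty, zero_smul]

lemma omegaTop_mem_slInvariants : omegaTop n ∈ slInvariants n := by
  refine mem_slInvariants.2 ⟨fun i k hik => ?_, fun a => ?_⟩
  · rw [linField_apply, omegaTop, ← Finset.insert_erase (Finset.mem_univ k),
      pd_mono_insert (Finset.notMem_erase k _), map_smul,
      mulX_mono_of_mem (Finset.mem_erase.2 ⟨hik, Finset.mem_univ i⟩), smul_zero]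
  · rw [torus, omegaTop, diagField_apply_mono, mem_traceZero.1 a.2, zero_smul]

lemma isWeightVector_vecField_of_mem_slInvariants {g : Lambda n} (hg : g ∈ slInvariants n)
    {p : ZMod 2} (hp : g ∈ lpar n p) {k : Fin n} (hL : vecField k g ∈ L) :
    IsWeightVector L (torus n) (fun a => -a.1 k) (p + 1) (vecField k g) where
  mem := ⟨hL, vecField_mem_epar hp k⟩
  sbL_eq a := by
    have ha : diagField a.1 g = 0 := (mem_slInvariants.1 hg).2 a
    rw [torus, sbL_diagField_vecField, ha, map_zero, zero_sub]
    module

theorem ContainsSl.isIndepBracket_vecField (hL : ContainsSl L) (hn : 3 ≤ n) {g : Lambda n}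
    (hg : g ∈ slInvariants n) {p : ZMod 2} (hp : g ∈ lpar n p) (hgL : ∀ k, vecField k g ∈ L)
    {i k : Fin n} (hik : i ≠ k) : IsIndepBracket L (torus n) (linField i k) (vecField k g) := by
  obtain ⟨l, hli, hlk⟩ := exists_ne_ne hn i k
  have hbr : sbL n (linField i k) (vecField i g) = -vecField k g := by
    rw [sbL_linField_vecField, (mem_slInvariants.1 hg).1 i k hik, if_pos rfl, map_zero, zero_sub]
  have h := isIndepBracket_left (c := -1) (hL.isWeightVector_linField hik)
    (isWeightVector_vecField_of_mem_slInvariants hg hp (hgL i))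
    (indepWeights_rootWeight_neg hik hli.symm hlk.symm)
  simp only [hbr, smul_neg, neg_smul, one_smul, neg_neg] at h
  exact h (hgL k)

/-- The divergence-free vector field `x_b x_R ∂_b - x_a x_R ∂_a`. -/
def balancedField (a b : Fin n) (R : Finset (Fin n)) : E n :=
  vecField b (mulX b (mono n R)) - vecField a (mulX a (mono n R))

lemma pd_mulX_mono {k : Fin n} {R : Finset (Fin n)} (hk : k ∉ R) :
    pd n k (mulX k (mono n R)) = mono n R := by
  rw [mulX_mono_of_notMem hk, map_smul, pd_mono_insert hk, smul_smul, crossSign_mul_self, one_smul]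

lemma linField_mulX (i : Fin n) {k : Fin n} {R : Finset (Fin n)} (hk : k ∉ R) :
    linField i k (mulX k (mono n R)) = mulX i (mono n R) := by
  rw [linField_apply, pd_mulX_mono hk]

lemma linField_mulX_self {i k : Fin n} (hik : i ≠ k) {R : Finset (Fin n)} (hi : i ∉ R)
    (hk : k ∉ R) : linField i k (mulX i (mono n R)) = 0 := by
  have hk' : k ∉ insert i R := by simp [hk, hik.symm]
  rw [linField_apply, mulX_mono_of_notMem hi, map_smul, pd_mono_of_notMem hk', smul_zero, map_zero]

lemma sbL_linField_vecField_mulX {a b : Fin n} {R : Finset (Fin n)} (ha : a ∉ R) :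
    sbL n (linField b a) (vecField b (mulX a (mono n R))) = balancedField a b R := by
  rw [sbL_linField_vecField, linField_mulX b ha, if_pos rfl, balancedField]

lemma sbL_linField_balancedField {a b : Fin n} (hab : a ≠ b) {R : Finset (Fin n)} (ha : a ∉ R)
    (hb : b ∉ R) :
    sbL n (linField a b) (balancedField a b R) = (2 : ℂ) • vecField b (mulX a (mono n R)) := by
  rw [balancedField, map_sub, sbL_linField_vecField, sbL_linField_vecField, if_neg hab,
    if_pos rfl, linField_mulX a hb, linField_mulX_self hab ha hb, map_zero]
  module

lemma isWeightVector_balancedField {a b : Fin n} {R : Finset (Fin n)} (ha : a ∉ R) (hb : b ∉ R)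
    (hL : balancedField a b R ∈ L) :
    IsWeightVector L (torus n) (fun c => ∑ l ∈ R, c.1 l) R.card (balancedField a b R) where
  mem := by
    have h : ∀ k ∉ R, vecField k (mulX k (mono n R)) ∈ epar n R.card := fun k hk => by
      have hins := vecField_mem_epar (mono_mem_lpar (insert k R)) k
      rw [Finset.card_insert_of_notMem hk, Nat.cast_succ, add_assoc, CharTwo.add_self_eq_zero,
        add_zero] at hins
      rw [mulX_mono_of_notMem hk, map_smul]
      exact Submodule.smul_mem _ _ hins
    exact ⟨hL, Submodule.sub_mem _ (h b hb) (h a ha)⟩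
  sbL_eq c := by
    have h : ∀ k ∉ R, sbL n (torus n c) (vecField k (mulX k (mono n R))) =
        (∑ l ∈ R, c.1 l) • vecField k (mulX k (mono n R)) := fun k hk => by
      rw [torus, mulX_mono_of_notMem hk, map_smul, map_smul, sbL_diagField_vecField_mono,
        Finset.sum_insert hk, add_sub_cancel_left, smul_comm]
    rw [balancedField, map_sub, h b hb, h a ha, smul_sub]

theorem ContainsSl.exists_isIndepBracket_mono (hL : ContainsSl L) (hn : 3 ≤ n)
    (hbal : ∀ a b R, a ∉ R → b ∉ R → balancedField a b R ∈ L)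
    {T : Finset (Fin n)} (hT : T.Nonempty) {k : Fin n} (hk : k ∉ T)
    (hTL : vecField k (mono n T) ∈ L) :
    ∃ i j, i ≠ j ∧ IsIndepBracket L (torus n) (linField i j) (vecField k (mono n T)) := by
  obtain ⟨a, R, haR, rfl⟩ : ∃ a R, a ∉ R ∧ insert a R = T := by
    obtain ⟨a, ha⟩ := hT
    exact ⟨a, T.erase a, Finset.notMem_erase a T, Finset.insert_erase ha⟩
  have hka : k ≠ a := fun h => hk (h ▸ Finset.mem_insert_self a R)
  have hkR : k ∉ R := fun h => hk (Finset.mem_insert_of_mem h)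
  rcases R.eq_empty_or_nonempty with rfl | hR
  · obtain ⟨j, hja, hjk⟩ := exists_ne_ne hn a k
    exact ⟨a, j, hja.symm, hL.isIndepBracket_linField_left hja.symm hjk hka.symm⟩
  · refine ⟨a, k, hka.symm, ?_⟩
    have h := isIndepBracket_left (c := crossSign a R * 2⁻¹) (hL.isWeightVector_linField hka.symm)
      (isWeightVector_balancedField haR hkR (hbal a k R haR hkR))
      (indepWeights_rootWeight_sum hka.symm hR haR hkR)
    rw [sbL_linField_balancedField hka.symm haR hkR, smul_smul, mul_assoc,
      inv_mul_cancel₀ two_ne_zero, mul_one, ← map_smul, ← mono_insert haR] at h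
    exact h hTL

/-! ### Centralizers and weight spaces in `W(n)` -/

lemma linField_apply_singleton {i k : Fin n} (g : Lambda n) : linField i k g {i} = g {k} := by
  simp [linField_apply, mulX_apply, pd_apply, crossSign, msign]

lemma linField_apply_eq_zero {i k : Fin n} (hik : i ≠ k) (g : Lambda n) {S : Finset (Fin n)}
    (hS : i ∉ S ∨ k ∈ S) : linField i k g S = 0 := by
  rw [linField_apply, mulX_apply]
  split_ifs with hi
  · rw [pd_apply, if_pos (Finset.mem_erase.2 ⟨hik.symm, hS.resolve_left (not_not.2 hi)⟩), mul_zero]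
  · rfl

lemma eq_smul_mono_singleton {i : Fin n} {g : Lambda n} (hg : ∀ S ≠ {i}, g S = 0) :
    g = g {i} • mono n {i} := by
  ext S
  rcases eq_or_ne S {i} with rfl | hS
  · simp [mono_apply]
  · simp [mono_apply, hS, hg S hS]

lemma coeff_eq_smul_mono_singleton (hn : 3 ≤ n) {F : Fin n → Lambda n}
    (hF : ∀ i k, i ≠ k → F i = linField i k (F k)) (i j : Fin n) :
    F i = F j {j} • mono n {i} := by
  have hcoeff : F i {i} = F j {j} := by
    rcases eq_or_ne i j with rfl | hij
    · rfl
    · rw [hF i j hij, linField_apply_singleton]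
  rw [← hcoeff]
  refine eq_smul_mono_singleton fun S hS => ?_
  by_cases hi : i ∈ S
  · obtain ⟨k, hk, hki⟩ := (Finset.nontrivial_iff_ne_singleton hi).2 hS |>.exists_ne i
    rw [hF i k hki.symm, linField_apply_eq_zero hki.symm _ (.inr hk)]
  · obtain ⟨k, hki, -⟩ := exists_ne_ne hn i i
    rw [hF i k hki.symm, linField_apply_eq_zero hki.symm _ (.inl hi)]

lemma exists_eq_smul_diagField_one (hn : 3 ≤ n) {u : E n} (hu : u ∈ Wn n)
    (hcomm : ∀ i k, i ≠ k → sbL n (linField i k) u = 0) : ∃ c : ℂ, u = c • diagField 1 := by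
  obtain ⟨F, rfl⟩ := hu
  have hF : ∀ i k, i ≠ k → F i = linField i k (F k) := fun i k hik => by
    have h := hcomm i k hik
    rw [sbL_linField_Wmap, ← map_zero (Wmap n)] at h
    simpa using (sub_eq_zero.1 (congrFun (Wmap_injective h) k)).symm
  obtain ⟨j⟩ : Nonempty (Fin n) := ⟨⟨0, by omega⟩⟩
  refine ⟨F j {j}, ?_⟩
  rw [Wmap_eq_sum, diagField, Finset.smul_sum]
  refine Finset.sum_congr rfl fun i _ => ?_
  rw [coeff_eq_smul_mono_singleton hn hF i j, Pi.one_apply, one_smul, map_smul]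

/- What commutes with `sl(n)` is a multiple of the Euler field `∑ x_i ∂_i`, and the bracket of the
Euler field with `g ∂_k` has constant term `-g(0) ∂_k`. -/
lemma eq_zero_of_sbL_eq_zero (hn : 3 ≤ n) {u : E n} (hu : u ∈ Wn n)
    (hcomm : ∀ i k, i ≠ k → sbL n u (linField i k) = 0) {g : Lambda n} (hg : g ∅ ≠ 0) {k : Fin n}
    (hgu : sbL n u (vecField k g) = 0) : u = 0 := by
  obtain ⟨c, rfl⟩ := exists_eq_smul_diagField_one hn hu fun i k hik => by
    rw [← neg_eq_zero, ← sbL_skew_of_even_left (linField_mem_epar i k), hcomm i k hik]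
  suffices c = 0 by rw [this, zero_smul]
  rw [map_smul, LinearMap.smul_apply, sbL_diagField_vecField, ← map_smul, ← map_sub, ← map_smul]
    at hgu
  have h := congrFun (vecField_injective k (hgu.trans (map_zero _).symm)) ∅
  simpa [diagField_apply, hg] using h

lemma eq_and_eq_singleton_of_weight_eq {i k j : Fin n} (hik : i ≠ k) {S : Finset (Fin n)}
    (h : ∀ a : traceZero n, ∑ l ∈ S, a.1 l - a.1 j = rootWeight i k a) : j = k ∧ S = {i} := by
  have hroot : i ∈ S ∧ k ∉ S ∧ j = k := by
    have := h (coroot i k)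
    rw [rootWeight_coroot hik, sum_coroot, coroot_apply] at this
    grind
  obtain ⟨hiS, hkS, rfl⟩ := hroot
  refine ⟨rfl, Finset.eq_singleton_iff_unique_mem.2 ⟨hiS, fun t ht => ?_⟩⟩
  by_contra hti
  have htj : j ≠ t := fun hjt => hkS (hjt ▸ ht)
  have := h (coroot t i)
  simp [rootWeight, coroot_apply, ht, hiS, htj, hik.symm, Ne.symm hti] at this

lemma exists_eq_smul_linField {i k : Fin n} (hik : i ≠ k) {v : E n} (hv : v ∈ Wn n)
    (hw : ∀ a, sbL n (torus n a) v = rootWeight i k a • v) : ∃ c : ℂ, v = c • linField i k := by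
  obtain ⟨F, rfl⟩ := hv
  have hF : ∀ j S a, F j S ≠ 0 → ∑ l ∈ S, a.1 l - a.1 j = rootWeight i k a := fun j S a hne => by
    have h := hw a
    rw [torus, sbL_diagField_Wmap, ← map_smul] at h
    have h := congrFun (congrFun (Wmap_injective h) j) S
    rw [Pi.sub_apply, diagField_apply, Pi.smul_apply, Pi.smul_apply, Pi.smul_apply, smul_eq_mul,
      smul_eq_mul, ← sub_mul] at h
    exact mul_right_cancel₀ hne h
  have hsupp : ∀ j S, F j S ≠ 0 → j = k ∧ S = {i} := fun j S hne =>
    eq_and_eq_singleton_of_weight_eq hik fun a => hF j S a hne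
  refine ⟨F k {i}, ?_⟩
  have hFk : F k = F k {i} • mono n {i} := eq_smul_mono_singleton fun S hS =>
    not_not.1 fun hne => hS (hsupp k S hne).2
  have hFj : ∀ j ≠ k, vecField j (F j) = 0 := fun j hj => by
    rw [show F j = 0 from funext fun S => not_not.1 fun hne => hj (hsupp j S hne).1, map_zero]
  rw [linField, ← map_smul, ← hFk, Wmap_eq_sum]
  exact Finset.sum_eq_single k (fun j _ hj => hFj j hj) fun hk => absurd (Finset.mem_univ k) hk

/-! ### Super-biderivations in the presence of `sl(n)` -/

namespace ContainsSl

lemma apply_torus_torus_eq_zero (hL : ContainsSl L) (hn : 3 ≤ n) {pf : ZMod 2}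
    {f : E n →ₗ[ℂ] E n →ₗ[ℂ] E n} (hf : IsSuperBider n L pf f) {g : Lambda n} {p : ZMod 2}
    (hg : g ∈ slInvariants n) (hp : g ∈ lpar n p) (hg0 : g ∅ ≠ 0)
    (hgL : ∀ k, vecField k g ∈ L) (a b : traceZero n) : f (torus n a) (torus n b) = 0 := by
  obtain ⟨i, k, hik⟩ : ∃ i k : Fin n, i ≠ k :=
    (Fin.nontrivial_iff_two_le.2 (by omega)).exists_pair_ne
  refine eq_zero_of_sbL_eq_zero hn (k := k)
    (hL.le_Wn (hf.maps 0 0 _ (hL.isTorus.mem a) _ (hL.isTorus.mem b)).1) (fun i k hik => ?_) hg0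
    (hf.sbL_apply_eq_zero hL.isTorus (hL.isIndepBracket_vecField hn hg hp hgL hik) a b)
  obtain ⟨j, hji, hjk⟩ := exists_ne_ne hn i k
  exact hf.sbL_apply_eq_zero hL.isTorus (hL.isIndepBracket_linField_left hji.symm hjk hik) a b

lemma exists_isScalarOnTorus_linField (hL : ContainsSl L) {pf : ZMod 2}
    {f : E n →ₗ[ℂ] E n →ₗ[ℂ] E n} (hf : IsSuperBider n L pf f)
    (hu : ∀ a b, f (torus n a) (torus n b) = 0) {i k : Fin n} (hik : i ≠ k) :
    ∃ c, IsScalarOnTorus f (torus n) c (linField i k) := by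
  have hx := hL.isWeightVector_linField hik
  obtain ⟨c, hc⟩ := exists_eq_smul_linField hik
    (hL.le_Wn (hf.maps 0 0 _ (hL.isTorus.mem (coroot i k)) _ hx.mem).1) fun a => by
      have h := hf.sbL_apply_eq_left hL.isTorus (coroot i k) a hx
      rw [hu, map_zero, LinearMap.zero_apply] at h
      exact (sub_eq_zero.1 h.symm).symm
  have h2 : rootWeight i k (coroot i k) ≠ 0 := by simp [rootWeight_coroot hik]
  exact ⟨c / rootWeight i k (coroot i k), hf.isScalarOnTorus_of_apply hL.isTorus hu hx h2
    (by rw [hc, div_mul_cancel₀ c h2])⟩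

theorem exists_eq_smul_sbL (hL : ContainsSl L) (hn : 3 ≤ n) {pf : ZMod 2}
    {f : E n →ₗ[ℂ] E n →ₗ[ℂ] E n} (hf : IsSuperBider n L pf f) {g : Lambda n} {p : ZMod 2}
    (hg : g ∈ slInvariants n) (hp : g ∈ lpar n p) (hg0 : g ∅ ≠ 0)
    (hgL : ∀ k, vecField k g ∈ L) {G : Set (E n)} (hG : GeneratedBy L G)
    (hbr : ∀ z ∈ G, ∃ i k, i ≠ k ∧ IsIndepBracket L (torus n) (linField i k) z) :
    ∃ c : ℂ, ∀ x ∈ L, ∀ y ∈ L, f x y = c • sbL n x y := by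
  obtain ⟨i₀, k₀, h₀⟩ : ∃ i k : Fin n, i ≠ k :=
    (Fin.nontrivial_iff_two_le.2 (by omega)).exists_pair_ne
  have hu := hL.apply_torus_torus_eq_zero hn hf hg hp hg0 hgL
  obtain ⟨c, hc⟩ := hL.exists_isScalarOnTorus_linField hf hu h₀
  have hpf : c = 0 ∨ pf = 0 := by
    have hx := hL.isWeightVector_linField h₀
    refine hf.eq_zero_or_of_isScalarOnTorus hL.isTorus hx (fun h => ?_)
      (i := coroot i₀ k₀) (by simp [rootWeight_coroot h₀]) hc
    have h := congrFun (vecField_injective k₀ (h.trans (map_zero _).symm)) {i₀}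
    simp [mono_apply] at h
  refine ⟨c, fun x hx y hy =>
    hf.apply_eq_smul_sbL hL.isTorus hu hpf hG (fun z hz => ?_) hx hy⟩
  obtain ⟨i, k, hik, hzbr⟩ := hbr z hz
  exact ⟨_, hL.isScalarOnTorus_linField hn hf hu h₀ hc hik, hzbr⟩

end ContainsSl

/-! ### The algebra `W(n)` -/

lemma containsSl_Wn : ContainsSl (Wn n) where
  le_Wn := le_rfl
  diagField_mem _ _ := Submodule.sum_mem _ fun _ _ => Submodule.smul_mem _ _ (vecField_mem_Wn _ _)
  linField_mem _ _ _ := vecField_mem_Wn _ _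

lemma generatedBy_Wn :
    GeneratedBy (Wn n)
      {z | ∃ g ∈ ({mono n ∅, omegaTop n} : Set (Lambda n)), ∃ k, vecField k g = z} := by
  intro P hP hbr
  have hpd : ∀ k, vecField k (mono n ∅) ∈ P := fun k => hP ⟨_, by simp, k, rfl⟩
  have hmono : ∀ T : Finset (Fin n), ∀ k, vecField k (mono n Tᶜ) ∈ P := fun T k => by
    induction T using Finset.induction_on with
    | empty =>
      rw [Finset.compl_empty]
      exact hP ⟨omegaTop n, by simp, k, rfl⟩
    | insert j T hj ih =>
      have hTc : insert j (insert j T)ᶜ = Tᶜ := by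
        rw [Finset.compl_insert, Finset.insert_erase (Finset.mem_compl.2 hj)]
      have hhom : ∀ i S, vecField i (mono n S) ∈ Wn n ⊓ epar n (S.card + 1) := fun i S =>
        ⟨vecField_mem_Wn i _, vecField_mem_epar (mono_mem_lpar S) i⟩
      have hsb : sbL n (vecField j (mono n ∅)) (vecField k (mono n Tᶜ)) =
          crossSign j (insert j T)ᶜ • vecField k (mono n (insert j T)ᶜ) := by
        rw [vecField_mono_empty, sbL_pd_vecField j k (mono_mem_lpar Tᶜ), ← map_smul,
          ← pd_mono_insert (by simp), hTc]
      have hmem := hbr _ _ _ (hhom j ∅) _ (hhom k Tᶜ) (hpd j) ih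
        (hsb ▸ Submodule.smul_mem _ _ (vecField_mem_Wn k _))
      rwa [hsb, Submodule.smul_mem_iff _ (crossSign_ne_zero _ _)] at hmem
  rintro _ ⟨F, rfl⟩
  rw [Wmap_eq_sum]
  refine Submodule.sum_mem _ fun k _ => map_mem_of_mono (vecField k) fun S _ => ?_
  rw [← compl_compl S]
  exact hmono _ k

theorem exists_eq_smul_sbL_of_Wn (hn : 3 ≤ n) {pf : ZMod 2} {f : E n →ₗ[ℂ] E n →ₗ[ℂ] E n}
    (hf : IsSuperBider n (Wn n) pf f) :
    ∃ c : ℂ, ∀ x ∈ Wn n, ∀ y ∈ Wn n, f x y = c • sbL n x y := by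
  refine containsSl_Wn.exists_eq_smul_sbL hn hf mono_empty_mem_slInvariants (mono_mem_lpar ∅)
    (by simp [mono_apply]) (fun k => vecField_mem_Wn k _) generatedBy_Wn ?_
  rintro _ ⟨g, hg, k, rfl⟩
  obtain ⟨i, hik, -⟩ := exists_ne_ne hn k k
  obtain ⟨hinv, p, hp⟩ : g ∈ slInvariants n ∧ ∃ p, g ∈ lpar n p := by
    rcases hg with rfl | rfl
    · exact ⟨mono_empty_mem_slInvariants, _, mono_mem_lpar ∅⟩
    · exact ⟨omegaTop_mem_slInvariants, _, mono_mem_lpar Finset.univ⟩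
  exact ⟨i, k, hik,
    containsSl_Wn.isIndepBracket_vecField hn hinv hp (fun k => vecField_mem_Wn k g) hik⟩

/-! ### The algebras `S(n)` and `S̃(n)` -/

/-- The element `1 - ε x_1 ⋯ x_n` of `Λ(n)`. -/
def oneSub (n : ℕ) (ε : ℂ) : Lambda n := mono n ∅ - ε • omegaTop n

/-- The vector fields `(1 - ε x_1 ⋯ x_n) D` with `D` divergence-free. The algebras `S(n)` and
`S̃(n)` are the members `ε = 0` and `ε = 1` of this family. -/
def specialAlgebra (n : ℕ) (ε : ℂ) : Submodule ℂ (E n) :=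
  (divFree n).map (Wmap n ∘ₗ LinearMap.pi fun i => mulOp n (oneSub n ε) ∘ₗ LinearMap.proj i)

lemma specialAlgebra_zero : specialAlgebra n 0 = Sn n := by
  have h : mulOp n (oneSub n 0) = 1 := by rw [oneSub, zero_smul, sub_zero, mulOp_mono_empty]
  rw [specialAlgebra, h]
  rfl

lemma specialAlgebra_one : specialAlgebra n 1 = Stn n := by
  have h : oneSub n 1 = oneM n := by rw [oneSub, one_smul, oneM]
  rw [specialAlgebra, h]
  rfl

variable {ε : ℂ}

lemma specialAlgebra_le_Wn : specialAlgebra n ε ≤ Wn n := by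
  rintro _ ⟨F, -, rfl⟩
  exact ⟨_, rfl⟩

lemma mulOp_omegaTop_apply (g : Lambda n) : mulOp n (omegaTop n) g = g ∅ • omegaTop n := by
  ext U
  by_cases hU : U = Finset.univ
  · simp [omegaTop, mulOp_mono_apply, mono_apply, hU, inversions, msign]
  · simp [omegaTop, mulOp_mono_apply, mono_apply, hU, Finset.univ_subset_iff]

lemma mulOp_oneSub_apply (g : Lambda n) : mulOp n (oneSub n ε) g = g - (ε * g ∅) • omegaTop n := by
  rw [oneSub, map_sub, map_smul, mulOp_mono_empty, LinearMap.sub_apply, LinearMap.smul_apply,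
    mulOp_omegaTop_apply, smul_smul, Module.End.one_apply]

lemma mulOp_oneSub_apply_of_apply_empty {g : Lambda n} (hg : g ∅ = 0) :
    mulOp n (oneSub n ε) g = g := by
  rw [mulOp_oneSub_apply, hg, mul_zero, zero_smul, sub_zero]

lemma Wmap_mem_specialAlgebra {F : Fin n → Lambda n} (hdiv : F ∈ divFree n)
    (hF : ∀ i, F i ∅ = 0) : Wmap n F ∈ specialAlgebra n ε :=
  ⟨F, hdiv, congrArg (Wmap n) (funext fun i => mulOp_oneSub_apply_of_apply_empty (hF i))⟩

lemma divMap_single (k : Fin n) (g : Lambda n) : divMap n (Pi.single k g) = pd n k g := by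
  change ∑ i, pd n i (Pi.single (M := fun _ => Lambda n) k g i) = _
  rw [Finset.sum_eq_single k (fun i _ hi => by rw [Pi.single_eq_of_ne hi, map_zero]) (by simp),
    Pi.single_eq_same]

lemma vecField_mulOp_oneSub_mem {g : Lambda n} {k : Fin n} (hg : pd n k g = 0) :
    vecField k (mulOp n (oneSub n ε) g) ∈ specialAlgebra n ε := by
  rw [vecField_eq_Wmap]
  exact ⟨Pi.single k g, (divMap_single k g).trans hg, congrArg (Wmap n) <| funext fun i =>
    Pi.apply_single (fun _ => mulOp n (oneSub n ε)) (fun _ => map_zero _) k g i⟩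

lemma vecField_oneSub_mem (k : Fin n) : vecField k (oneSub n ε) ∈ specialAlgebra n ε := by
  rw [← mulOp_apply_mono_empty (oneSub n ε)]
  exact vecField_mulOp_oneSub_mem (pd_mono_of_notMem (Finset.notMem_empty k))

lemma mulOp_oneSub_mono {T : Finset (Fin n)} (hT : T.Nonempty) :
    mulOp n (oneSub n ε) (mono n T) = mono n T :=
  mulOp_oneSub_apply_of_apply_empty (if_neg hT.ne_empty.symm)

lemma vecField_mono_mem {T : Finset (Fin n)} (hT : T.Nonempty) {k : Fin n} (hk : k ∉ T) :
    vecField k (mono n T) ∈ specialAlgebra n ε := by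
  rw [← mulOp_oneSub_mono (ε := ε) hT]
  exact vecField_mulOp_oneSub_mem (pd_mono_of_notMem hk)

lemma mulX_apply_empty (i : Fin n) (g : Lambda n) : mulX i g ∅ = 0 := by
  rw [mulX_apply, if_neg (Finset.notMem_empty i)]

lemma balancedField_mem_specialAlgebra {a b : Fin n} {R : Finset (Fin n)} (ha : a ∉ R)
    (hb : b ∉ R) : balancedField a b R ∈ specialAlgebra n ε := by
  rw [balancedField, vecField_eq_Wmap, vecField_eq_Wmap, ← map_sub]
  refine Wmap_mem_specialAlgebra ?_ fun i => ?_
  · rw [divFree, LinearMap.mem_ker, map_sub, divMap_single, divMap_single, pd_mulX_mono hb,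
      pd_mulX_mono ha, sub_self]
  · simp [Pi.single_apply, ite_apply, mulX_apply_empty]

lemma diagField_mem_specialAlgebra {a : Fin n → ℂ} (ha : a ∈ traceZero n) :
    diagField a ∈ specialAlgebra n ε := by
  have h : diagField a = Wmap n fun i => a i • mono n {i} := by
    simp only [diagField, Wmap_eq_sum, map_smul]
  rw [h]
  refine Wmap_mem_specialAlgebra ?_ fun i => ?_
  · change ∑ i, pd n i (a i • mono n {i}) = 0
    simp only [map_smul, pd_mono_singleton, if_true]
    rw [← Finset.sum_smul, mem_traceZero.1 ha, zero_smul]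
  · simp [mono_apply]

lemma containsSl_specialAlgebra : ContainsSl (specialAlgebra n ε) where
  le_Wn := specialAlgebra_le_Wn
  diagField_mem _ := diagField_mem_specialAlgebra
  linField_mem i k hik := vecField_mono_mem (Finset.singleton_nonempty i)
    (by simpa using hik.symm)

lemma oneSub_mem_slInvariants : oneSub n ε ∈ slInvariants n :=
  sub_mem mono_empty_mem_slInvariants (Submodule.smul_mem _ _ omegaTop_mem_slInvariants)

lemma oneSub_mem_lpar (hε : ε = 0 ∨ Even n) : oneSub n ε ∈ lpar n 0 := by
  refine sub_mem (mono_mem_lpar ∅) ?_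
  rcases hε with rfl | hn
  · rw [zero_smul]
    exact zero_mem _
  · have h := mono_mem_lpar (Finset.univ : Finset (Fin n))
    rw [Finset.card_univ, Fintype.card_fin, (ZMod.natCast_eq_zero_iff_even).2 hn] at h
    exact Submodule.smul_mem _ _ h

lemma sum_smul_vecField_mulX_mem {P : Submodule ℂ (E n)} {R : Finset (Fin n)}
    (hP : ∀ a b, a ∉ R → b ∉ R → a ≠ b → balancedField a b R ∈ P) {c : Fin n → ℂ}
    (hsum : ∑ k, c k = 0) (hc : ∀ k ∈ R, c k = 0) :
    ∑ k, c k • vecField k (mulX k (mono n R)) ∈ P := by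
  by_cases hR : ∃ a, a ∉ R
  · obtain ⟨a, ha⟩ := hR
    have hbal : ∑ k, c k • vecField k (mulX k (mono n R)) = ∑ k, c k • balancedField a k R := by
      simp only [balancedField, smul_sub, Finset.sum_sub_distrib, ← Finset.sum_smul, hsum,
        zero_smul, sub_zero]
    rw [hbal]
    refine Submodule.sum_mem _ fun k _ => ?_
    by_cases hk : k ∈ R
    · simp [hc k hk]
    rcases eq_or_ne a k with rfl | hak
    · simp [balancedField]
    · exact Submodule.smul_mem _ _ (hP a k ha hk hak)
  · push Not at hR
    simp [fun k => hc k (hR k)]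

lemma sum_vecField_mulX_mem {P : Submodule ℂ (E n)}
    (hP : ∀ a b R, a ∉ R → b ∉ R → a ≠ b → balancedField a b R ∈ P) {H : Fin n → Lambda n}
    (hsum : ∑ k, H k = 0) (hH : ∀ k R, k ∈ R → H k R = 0) :
    ∑ k, vecField k (mulX k (H k)) ∈ P := by
  have hexp : ∑ k, vecField k (mulX k (H k)) =
      ∑ R, ∑ k, H k R • vecField k (mulX k (mono n R)) := by
    rw [Finset.sum_comm]
    refine Finset.sum_congr rfl fun k _ => ?_
    conv_lhs => rw [← sum_smul_mono (H k)]
    simp only [map_sum, map_smul]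
  rw [hexp]
  refine Submodule.sum_mem _ fun R _ =>
    sum_smul_vecField_mulX_mem (fun a b => hP a b R) ?_ fun k => hH k R
  simpa using congrFun hsum R

/- The part of `F_k` not divisible by `x_k` is a combination of monomials `x_S` with `k ∉ S`. The
other part is `x_k ∂_k F_k`, and the `∂_k F_k` add up to `0`. -/
lemma specialAlgebra_le {P : Submodule ℂ (E n)}
    (hmono : ∀ S k, k ∉ S → vecField k (mulOp n (oneSub n ε) (mono n S)) ∈ P)
    (hbal : ∀ a b R, a ∉ R → b ∉ R → a ≠ b → balancedField a b R ∈ P) :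
    specialAlgebra n ε ≤ P := by
  rintro _ ⟨F, hF, rfl⟩
  have hdecomp : ∀ k, F k = pd n k (mulX k (F k)) + mulX k (pd n k (F k)) := fun k => by
    have h := LinearMap.congr_fun (pd_mul_mulX k k) (F k)
    rw [if_pos rfl] at h
    exact (eq_sub_iff_add_eq.1 h).symm
  have hsplit : ∀ k, vecField k (mulOp n (oneSub n ε) (F k)) =
      vecField k (mulOp n (oneSub n ε) (pd n k (mulX k (F k)))) +
        vecField k (mulX k (pd n k (F k))) := fun k => by
    conv_lhs => rw [hdecomp k, map_add, map_add,
      mulOp_oneSub_apply_of_apply_empty (mulX_apply_empty k _)]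
  change ∑ k, vecField k (mulOp n (oneSub n ε) (F k)) ∈ P
  simp only [hsplit, Finset.sum_add_distrib]
  refine add_mem (Submodule.sum_mem _ fun k _ => ?_)
    (sum_vecField_mulX_mem hbal hF fun k R hk => by rw [pd_apply, if_pos hk])
  refine map_mem_of_mono (vecField k ∘ₗ mulOp n (oneSub n ε)) fun S hS => hmono S k fun hk => hS ?_
  rw [pd_apply, if_pos hk]

lemma generatedBy_specialAlgebra : GeneratedBy (specialAlgebra n ε)
    {z | ∃ S k, k ∉ S ∧ vecField k (mulOp n (oneSub n ε) (mono n S)) = z} := by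
  intro P hP hbr
  refine specialAlgebra_le (fun S k hk => hP ⟨S, k, hk, rfl⟩) fun a b R ha hb hab => ?_
  have hmem : ∀ T k, T.Nonempty → k ∉ T → vecField k (mono n T) ∈ P := fun T k hT hk =>
    hP ⟨T, k, hk, by rw [mulOp_oneSub_mono hT]⟩
  have hhom : ∀ T k, T.Nonempty → k ∉ T →
      vecField k (mono n T) ∈ specialAlgebra n ε ⊓ epar n (T.card + 1) := fun T k hT hk =>
    ⟨vecField_mono_mem hT hk, vecField_mem_epar (mono_mem_lpar T) k⟩
  have hba : a ∉ ({b} : Finset (Fin n)) := by simpa using hab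
  have hbR : b ∉ insert a R := by simp [hab.symm, hb]
  have hsb : sbL n (linField b a) (vecField b (mono n (insert a R))) =
      crossSign a R • balancedField a b R := by
    rw [mono_insert ha, map_smul, map_smul, sbL_linField_vecField_mulX ha]
  have hbrmem := hbr _ _ _ (hhom {b} a (Finset.singleton_nonempty b) hba) _
    (hhom (insert a R) b (Finset.insert_nonempty a R) hbR)
    (hmem _ _ (Finset.singleton_nonempty b) hba) (hmem _ _ (Finset.insert_nonempty a R) hbR)
    (hsb ▸ Submodule.smul_mem _ _ (balancedField_mem_specialAlgebra ha hb))
  rwa [hsb, Submodule.smul_mem_iff _ (crossSign_ne_zero a R)] at hbrmem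

lemma oneSub_apply_empty (hn : 0 < n) : oneSub n ε ∅ = 1 := by
  have : NeZero n := ⟨hn.ne'⟩
  have hne : (∅ : Finset (Fin n)) ≠ Finset.univ := Finset.univ_nonempty.ne_empty.symm
  simp [oneSub, omegaTop, mono_apply, hne]

theorem exists_eq_smul_sbL_of_specialAlgebra (hn : 3 ≤ n) (hε : ε = 0 ∨ Even n) {pf : ZMod 2}
    {f : E n →ₗ[ℂ] E n →ₗ[ℂ] E n} (hf : IsSuperBider n (specialAlgebra n ε) pf f) :
    ∃ c : ℂ, ∀ x ∈ specialAlgebra n ε, ∀ y ∈ specialAlgebra n ε, f x y = c • sbL n x y := by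
  have hg0 : oneSub n ε ∅ ≠ 0 := by
    rw [oneSub_apply_empty (by omega)]
    exact one_ne_zero
  refine containsSl_specialAlgebra.exists_eq_smul_sbL hn hf oneSub_mem_slInvariants
    (oneSub_mem_lpar hε) hg0 vecField_oneSub_mem generatedBy_specialAlgebra ?_
  rintro _ ⟨S, k, hk, rfl⟩
  rcases S.eq_empty_or_nonempty with rfl | hS
  · obtain ⟨i, hik, -⟩ := exists_ne_ne hn k k
    rw [mulOp_apply_mono_empty]
    exact ⟨i, k, hik, containsSl_specialAlgebra.isIndepBracket_vecField hn oneSub_mem_slInvariants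
      (oneSub_mem_lpar hε) vecField_oneSub_mem hik⟩
  · rw [mulOp_oneSub_mono hS]
    exact containsSl_specialAlgebra.exists_isIndepBracket_mono hn
      (fun _ _ _ ha hb => balancedField_mem_specialAlgebra ha hb) hS hk (vecField_mono_mem hS hk)

end

theorem superBider_inner_WSSt_general (n : ℕ) (hn : 3 ≤ n) (t : CT)
    (ht : t = CT.W ∨ t = CT.S ∨ (t = CT.St ∧ Even n))
    (pf : ZMod 2) (f : E n →ₗ[ℂ] E n →ₗ[ℂ] E n) (hf : IsSuperBider n (t.algebra n) pf f) :
    ∃ lam : ℂ, ∀ x ∈ t.algebra n, ∀ y ∈ t.algebra n, f x y = lam • sbL n x y := by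
  rcases ht with rfl | rfl | ⟨rfl, heven⟩
  · exact exists_eq_smul_sbL_of_Wn hn hf
  · change IsSuperBider n (Sn n) pf f at hf
    change ∃ lam : ℂ, ∀ x ∈ Sn n, ∀ y ∈ Sn n, f x y = lam • sbL n x y
    rw [← specialAlgebra_zero] at hf ⊢
    exact exists_eq_smul_sbL_of_specialAlgebra hn (.inl rfl) hf
  · change IsSuperBider n (Stn n) pf f at hf
    change ∃ lam : ℂ, ∀ x ∈ Stn n, ∀ y ∈ Stn n, f x y = lam • sbL n x y
    rw [← specialAlgebra_one] at hf ⊢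
    exact exists_eq_smul_sbL_of_specialAlgebra hn (.inr heven) hf

/-- Every (homogeneous) super-biderivation of the Cartan type Lie
superalgebra `W(n)`, `S(n)`, or `S̃(n)` (`n` even), `n ≥ 4`, over `ℂ` is an inner
super-biderivation: `BDer(L) = IBDer(L)`. -/
theorem superBider_inner_WSSt (n : ℕ) (hn : 4 ≤ n) (t : CT)
    (ht : t = CT.W ∨ t = CT.S ∨ (t = CT.St ∧ Even n))
    (pf : ZMod 2) (f : E n →ₗ[ℂ] E n →ₗ[ℂ] E n)
    (hf : IsSuperBider n (t.algebra n) pf f) :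
    ∃ lam : ℂ, ∀ x ∈ t.algebra n, ∀ y ∈ t.algebra n, f x y = lam • sbL n x y :=
  superBider_inner_WSSt_general n (by omega) t ht pf f hf

end CartanSuper
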